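/- arXiv:2209.13440 — 3 statements merged into one kernel-verified Lean document; each statement's English description precedes it below -/
import Mathlib

section
/- Let n ≥ 1 and let Φ₁, Φ₂ : ℂⁿ → ℝ be real-quadratic weights whose Levi matrices are positive definite. Then there exists a constant C > 0 such that ‖f‖_{H_{Φ₂}} ≤ C·‖f‖_{H_{Φ₁}} for every entire function f on ℂⁿ (in particular H_{Φ₁} ⊆ H_{Φ₂}) if and only if Φ₁(x) ≤ Φ₂(x) for all x ∈ ℂⁿ. -/
open MeasureTheory Real Matrix
open scoped ENNReal ComplexOrder

noncomputable section

/-- Bilinear dot product on ℂⁿ. -/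
def dotC {n : ℕ} (x y : Fin n → ℂ) : ℂ := ∑ j, x j * y j

/-- The real-quadratic weight Φ(x) = (1/2)(L x·x̄ + Re(P x·x)). -/
def weight {n : ℕ} (L P : Matrix (Fin n) (Fin n) ℂ) (x : Fin n → ℂ) : ℝ :=
  (1 / 2) * ((dotC (L.mulVec x) (star x)).re + (dotC (P.mulVec x) x).re)

/-- Squared H_Φ norm, valued in [0,∞]. -/
def HPhiNormSq {n : ℕ} (Φ : (Fin n → ℂ) → ℝ) (f : (Fin n → ℂ) → ℂ) : ℝ≥0∞ :=
  ∫⁻ x, ENNReal.ofReal (‖f x‖ ^ 2 * Real.exp (-4 * π * Φ x))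

/-- H_Φ norm, valued in [0,∞]. -/
def HPhiNorm {n : ℕ} (Φ : (Fin n → ℂ) → ℝ) (f : (Fin n → ℂ) → ℂ) : ℝ≥0∞ :=
  HPhiNormSq Φ f ^ (1 / 2 : ℝ)

/-- Entrywise complex conjugate of a matrix. -/
def conjM {m : Type*} (M : Matrix m m ℂ) : Matrix m m ℂ := M.map (starRingEnd ℂ)

/-- The matrix 𝐀_Φ associated with the weight with Levi matrix L and pluriharmonic part P. -/
def Amat {n : ℕ} (L P : Matrix (Fin n) (Fin n) ℂ) :
    Matrix (Fin n ⊕ Fin n) (Fin n ⊕ Fin n) ℂ :=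
  Matrix.fromBlocks (-(conjM L⁻¹ * P)) (Complex.I • conjM L⁻¹)
    (Complex.I • (L - conjM (P * L⁻¹) * P)) (-(conjM (P * L⁻¹)))

/-- Norm of the embedding H_{Φ₁} → H_{Φ₂}. -/
def embedNorm {n : ℕ} (Φ₁ Φ₂ : (Fin n → ℂ) → ℝ) : ℝ≥0∞ :=
  ⨆ f : {f : (Fin n → ℂ) → ℂ //
      Differentiable ℂ f ∧ 0 < HPhiNorm Φ₁ f ∧ HPhiNorm Φ₁ f ≠ ⊤},
    HPhiNorm Φ₂ f.1 / HPhiNorm Φ₁ f.1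

/-- The complex symplectic form on ℂ^{2n}. -/
def symp {n : ℕ} (X Y : Fin n ⊕ Fin n → ℂ) : ℂ :=
  ∑ j, X (Sum.inr j) * Y (Sum.inl j) - ∑ j, Y (Sum.inr j) * X (Sum.inl j)

/-- The phase-space shift S_Y. -/
def shiftOp {n : ℕ} (Y : (Fin n → ℂ) × (Fin n → ℂ)) (f : (Fin n → ℂ) → ℂ)
    (x : Fin n → ℂ) : ℂ :=
  Complex.exp (2 * (π : ℂ) * Complex.I * (-(1 / 2) * dotC Y.1 Y.2 + dotC Y.2 x)) * f (x - Y.1)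

/-! Test the embedding on the coherent states `f_w` of the first weight, Gaussians for which
`|f_w(x)|² e^{-4πΦ₁(x)} = e^{-2π L₁(x - w)·(x - w)‾}`. Their `H_{Φ₁}` norm is finite and does not
depend on `w`, while `‖f_w‖²_{H_{Φ₂}} = ∫ e^{4π(Φ₁ - Φ₂)(w + y)} e^{-2π L₁ y·ȳ} dy`. If
`Φ₁(w) > Φ₂(w)` then, by homogeneity, `(Φ₁ - Φ₂)(t w + y) → ∞` as `t → ∞` for each `y`, so Fatou's
lemma makes the `H_{Φ₂}` norm of `f_{tw}` blow up. -/

section Homogeneous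

open Filter Topology

variable {E : Type*} [AddCommGroup E] [Module ℝ E] [TopologicalSpace E] [ContinuousAdd E]
  [ContinuousSMul ℝ E]

lemma tendsto_smul_add_atTop_of_homogeneous {D : E → ℝ} {k : ℕ} (hk : k ≠ 0)
    (hhom : ∀ (t : ℝ) x, 0 < t → D (t • x) = t ^ k * D x) {w : E} (hD : ContinuousAt D w)
    (hw : 0 < D w) (y : E) : Tendsto (fun t : ℝ => D (t • w + y)) atTop atTop := by
  have harg : Tendsto (fun t : ℝ => w + t⁻¹ • y) atTop (𝓝 w) := by
    simpa using ((tendsto_inv_atTop_zero (𝕜 := ℝ)).smul_const y).const_add w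
  refine ((tendsto_pow_atTop hk).atTop_mul_pos hw (hD.tendsto.comp harg)).congr' ?_
  filter_upwards [eventually_gt_atTop 0] with t ht
  rw [Function.comp_apply, ← hhom t _ ht, smul_add, smul_inv_smul₀ ht.ne']

end Homogeneous

section Integration

open Filter Topology

lemma tendsto_lintegral_nhds_top {α ι : Type*} [MeasurableSpace α] {μ : Measure α} [NeZero μ]
    {l : Filter ι} [l.IsCountablyGenerated] {F : ι → α → ℝ≥0∞} (hF : ∀ i, AEMeasurable (F i) μ)
    (hlim : ∀ᵐ a ∂μ, Tendsto (fun i => F i a) l (𝓝 ⊤)) :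
    Tendsto (fun i => ∫⁻ a, F i a ∂μ) l (𝓝 ⊤) := by
  rcases l.eq_or_neBot with rfl | _
  · exact tendsto_bot
  refine tendsto_of_le_liminf_of_limsup_le ?_ le_top
  calc (⊤ : ℝ≥0∞) = ∫⁻ _, ⊤ ∂μ := by simp [ENNReal.top_mul, NeZero.ne μ]
    _ = ∫⁻ a, liminf (fun i => F i a) l ∂μ :=
        lintegral_congr_ae (hlim.mono fun a ha => ha.liminf_eq.symm)
    _ ≤ liminf (fun i => ∫⁻ a, F i a ∂μ) l := lintegral_liminf_le' hF

lemma integrable_comp_continuousAddEquiv {G F : Type*} [AddGroup G] [TopologicalSpace G]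
    [IsTopologicalAddGroup G] [LocallyCompactSpace G] [SecondCountableTopology G]
    [MeasurableSpace G] [BorelSpace G] [NormedAddCommGroup F] {μ : Measure G}
    [μ.IsAddHaarMeasure] {f : G → F} (hf : Integrable f μ) (e : G ≃ₜ+ G) :
    Integrable (f ∘ e) μ := by
  refine (e.toHomeomorph.measurableEmbedding.integrable_map_iff).1 ?_
  have hmap : μ.map e.toHomeomorph = (μ.map e).addHaarScalarFactor μ • μ :=
    Measure.isAddLeftInvariant_eq_smul (μ.map e) μ
  rw [hmap]
  exact hf.smul_measure_nnreal

lemma integrable_exp_neg_mul_norm_sq {V : Type*} [NormedAddCommGroup V] [InnerProductSpace ℝ V]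
    [FiniteDimensional ℝ V] [MeasurableSpace V] [BorelSpace V] {b : ℝ} (hb : 0 < b) :
    Integrable fun v : V => Real.exp (-b * ‖v‖ ^ 2) := by
  have h := GaussianFourier.integrable_cexp_neg_mul_sq_norm_add (V := V) (b := (b : ℂ))
    (by simpa using hb) 0 0
  refine h.norm.congr (.of_forall fun v => ?_)
  simp only [Complex.norm_exp, zero_mul, add_zero]
  norm_cast

end Integration

section LeviForm

variable {n : ℕ}

/-- The Levi form `L x · x̄` of a weight, the exponent of the Gaussians below. It is already real
for Hermitian `L`; taking the real part makes it real-valued for every `L`. -/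
def leviForm (L : Matrix (Fin n) (Fin n) ℂ) (x : Fin n → ℂ) : ℝ :=
  (dotC (L.mulVec x) (star x)).re

lemma dotC_eq_dotProduct (x y : Fin n → ℂ) : dotC x y = x ⬝ᵥ y := rfl

lemma dotC_mulVec_star_re_comm {L : Matrix (Fin n) (Fin n) ℂ} (hL : L.IsHermitian)
    (x w : Fin n → ℂ) : (dotC (L *ᵥ w) (star x)).re = (dotC (L *ᵥ x) (star w)).re := by
  have h : dotC (L *ᵥ w) (star x) = star (dotC (L *ᵥ x) (star w)) := by
    rw [dotC_eq_dotProduct, dotC_eq_dotProduct, dotProduct_comm (L *ᵥ x), ← star_dotProduct,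
      star_mulVec, hL.eq, ← dotProduct_mulVec, dotProduct_comm]
  rw [h, Complex.star_def, Complex.conj_re]

lemma leviForm_sub {L : Matrix (Fin n) (Fin n) ℂ} (hL : L.IsHermitian) (x w : Fin n → ℂ) :
    leviForm L (x - w) =
      leviForm L x + leviForm L w - 2 * (dotC (L *ᵥ x) (star w)).re := by
  have h := dotC_mulVec_star_re_comm hL x w
  simp only [leviForm, dotC_eq_dotProduct, mulVec_sub, star_sub, sub_dotProduct,
    dotProduct_sub, Complex.sub_re] at h ⊢
  linarith

lemma continuous_leviForm (L : Matrix (Fin n) (Fin n) ℂ) : Continuous (leviForm L) := by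
  unfold leviForm dotC mulVec dotProduct
  simp only [Pi.star_apply]
  fun_prop

lemma leviForm_conjTranspose_mul_self {m : Type*} [Fintype m] (B : Matrix m (Fin n) ℂ)
    (x : Fin n → ℂ) :
    leviForm (Bᴴ * B) x = ∑ j, ‖(B *ᵥ x) j‖ ^ 2 := by
  have h : dotC ((Bᴴ * B) *ᵥ x) (star x) = (B *ᵥ x) ⬝ᵥ star (B *ᵥ x) := by
    rw [dotC_eq_dotProduct, dotProduct_comm, ← mulVec_mulVec, dotProduct_mulVec, ← star_mulVec,
      dotProduct_comm]
  rw [leviForm, h, dotProduct, Complex.re_sum]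
  refine Finset.sum_congr rfl fun j _ => ?_
  rw [Pi.star_apply, Complex.star_def, Complex.mul_conj', ← Complex.ofReal_pow, Complex.ofReal_re]

open scoped MatrixOrder Matrix.Norms.L2Operator in
lemma exists_isUnit_eq_conjTranspose_mul_self_of_posDef {𝕜 m : Type*} [RCLike 𝕜] [Fintype m]
    [DecidableEq m] {A : Matrix m m 𝕜} (hA : A.PosDef) :
    ∃ B : Matrix m m 𝕜, IsUnit B ∧ A = Bᴴ * B :=
  CStarAlgebra.isStrictlyPositive_iff_eq_star_mul_self.1 hA.isStrictlyPositive

lemma integrable_exp_neg_mul_leviForm {L : Matrix (Fin n) (Fin n) ℂ} (hL : L.PosDef) {c : ℝ}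
    (hc : 0 < c) : Integrable fun x => Real.exp (-c * leviForm L x) := by
  obtain ⟨B, hB, rfl⟩ := exists_isUnit_eq_conjTranspose_mul_self_of_posDef hL
  have hprod : Integrable fun z : Fin n → ℂ => ∏ j, Real.exp (-c * ‖z j‖ ^ 2) :=
    Integrable.fintype_prod fun _ => integrable_exp_neg_mul_norm_sq hc
  let e : (Fin n → ℂ) ≃L[ℂ] (Fin n → ℂ) :=
    (B.toLinearEquiv' hB.invertible).toContinuousLinearEquiv
  refine (integrable_comp_continuousAddEquiv hprod e.toContinuousAddEquiv).congr
    (.of_forall fun x => ?_)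
  change ∏ j, Real.exp (-c * ‖(B *ᵥ x) j‖ ^ 2) = _
  simp only [leviForm_conjTranspose_mul_self, ← Real.exp_sum, Finset.mul_sum]

end LeviForm

section Weight

variable {n : ℕ}

lemma weight_eq (L P : Matrix (Fin n) (Fin n) ℂ) (x : Fin n → ℂ) :
    weight L P x = (1 / 2) * (leviForm L x + (dotC (P *ᵥ x) x).re) := rfl

lemma weight_smul (L P : Matrix (Fin n) (Fin n) ℂ) (t : ℝ) (x : Fin n → ℂ) :
    weight L P (t • x) = t ^ 2 * weight L P x := by
  simp only [weight, dotC_eq_dotProduct, mulVec_smul, star_smul, star_trivial, smul_dotProduct,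
    dotProduct_smul, Complex.smul_re, smul_eq_mul]
  ring

lemma continuous_weight (L P : Matrix (Fin n) (Fin n) ℂ) : Continuous (weight L P) := by
  have hL := continuous_leviForm L
  have hP : Continuous fun x : Fin n → ℂ => (dotC (P *ᵥ x) x).re := by
    unfold dotC mulVec dotProduct
    fun_prop
  simp only [funext (weight_eq L P)]
  fun_prop

lemma hPhiNorm_sq (Φ : (Fin n → ℂ) → ℝ) (f : (Fin n → ℂ) → ℂ) :
    HPhiNorm Φ f ^ 2 = HPhiNormSq Φ f := by
  rw [HPhiNorm, ← ENNReal.rpow_natCast, ← ENNReal.rpow_mul]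
  norm_num

lemma antitone_hPhiNorm (f : (Fin n → ℂ) → ℂ) : Antitone fun Φ => HPhiNorm Φ f := by
  intro Φ₁ Φ₂ h
  refine ENNReal.rpow_le_rpow (lintegral_mono fun x => ENNReal.ofReal_le_ofReal ?_) (by norm_num)
  have hx : -4 * π * Φ₂ x ≤ -4 * π * Φ₁ x :=
    mul_le_mul_of_nonpos_left (h x) (by linarith [pi_pos])
  gcongr

end Weight

section CoherentState

open Filter Topology

variable {n : ℕ} {L : Matrix (Fin n) (Fin n) ℂ}

/-- The coherent state centred at `w` for the weight `Φ` given by `L` and `P`, normalised so that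
`‖coherentState L P w x‖² e^{-4πΦ(x)}` is a translate of the Gaussian `e^{-2π L x·x̄}`. -/
def coherentState (L P : Matrix (Fin n) (Fin n) ℂ) (w x : Fin n → ℂ) : ℂ :=
  Complex.exp (2 * π * dotC (L *ᵥ x) (star w) + π * dotC (P *ᵥ x) x
    - π * dotC (L *ᵥ w) (star w))

lemma differentiable_coherentState (L P : Matrix (Fin n) (Fin n) ℂ) (w : Fin n → ℂ) :
    Differentiable ℂ (coherentState L P w) := by
  unfold coherentState dotC mulVec dotProduct
  fun_prop

lemma norm_coherentState_sq (hL : L.IsHermitian) (P : Matrix (Fin n) (Fin n) ℂ)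
    (w x : Fin n → ℂ) :
    ‖coherentState L P w x‖ ^ 2 =
      Real.exp (4 * π * weight L P x - 2 * π * leviForm L (x - w)) := by
  rw [coherentState, Complex.norm_exp, ← Real.exp_nat_mul, leviForm_sub hL, weight_eq]
  have h2π : (2 : ℂ) * π = ((2 * π : ℝ) : ℂ) := by push_cast; rfl
  rw [h2π, Complex.sub_re, Complex.add_re, Complex.re_ofReal_mul, Complex.re_ofReal_mul,
    Complex.re_ofReal_mul, ← leviForm]
  congr 1
  push_cast
  ring

lemma hPhiNormSq_coherentState (hL : L.IsHermitian) (P : Matrix (Fin n) (Fin n) ℂ)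
    (Φ : (Fin n → ℂ) → ℝ) (w : Fin n → ℂ) :
    HPhiNormSq Φ (coherentState L P w) =
      ∫⁻ y, ENNReal.ofReal (Real.exp
        (4 * π * (weight L P (w + y) - Φ (w + y)) - 2 * π * leviForm L y)) := by
  rw [HPhiNormSq, ← lintegral_add_left_eq_self _ w]
  refine lintegral_congr fun y => ?_
  rw [norm_coherentState_sq hL, ← Real.exp_add, add_sub_cancel_left]
  ring_nf

lemma hPhiNormSq_coherentState_self (hL : L.IsHermitian) (P : Matrix (Fin n) (Fin n) ℂ)
    (w : Fin n → ℂ) :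
    HPhiNormSq (weight L P) (coherentState L P w) =
      ∫⁻ y, ENNReal.ofReal (Real.exp (-(2 * π) * leviForm L y)) := by
  simp only [hPhiNormSq_coherentState hL, sub_self, mul_zero, zero_sub, neg_mul]

lemma tendsto_hPhiNormSq_coherentState_smul_nhds_top (hL : L.IsHermitian)
    (P : Matrix (Fin n) (Fin n) ℂ) {Φ : (Fin n → ℂ) → ℝ} (hΦ : Continuous Φ)
    (hhom : ∀ (t : ℝ) x, 0 < t → Φ (t • x) = t ^ 2 * Φ x) {w : Fin n → ℂ}
    (hw : Φ w < weight L P w) :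
    Tendsto (fun t : ℝ => HPhiNormSq Φ (coherentState L P (t • w))) atTop (𝓝 ⊤) := by
  have hweight := continuous_weight L P
  have hlevi := continuous_leviForm L
  simp only [hPhiNormSq_coherentState hL]
  refine tendsto_lintegral_nhds_top (fun t => by fun_prop) (.of_forall fun y => ?_)
  have hgap : Tendsto (fun t : ℝ => weight L P (t • w + y) - Φ (t • w + y)) atTop atTop :=
    tendsto_smul_add_atTop_of_homogeneous (D := fun x => weight L P x - Φ x) two_ne_zero
      (fun t x ht => by rw [weight_smul, hhom t x ht, mul_sub])
      (hweight.sub hΦ).continuousAt (sub_pos.2 hw) y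
  refine ENNReal.tendsto_ofReal_nhds_top.2 (Real.tendsto_exp_atTop.comp ?_)
  exact tendsto_atTop_add_const_right _ _ (hgap.const_mul_atTop (by positivity))

theorem weight_le_of_hPhiNorm_le (hL : L.PosDef) {P : Matrix (Fin n) (Fin n) ℂ}
    {Φ : (Fin n → ℂ) → ℝ} (hΦ : Continuous Φ)
    (hhom : ∀ (t : ℝ) x, 0 < t → Φ (t • x) = t ^ 2 * Φ x) {C : ℝ≥0∞} (hC : C ≠ ⊤)
    (hbound : ∀ f : (Fin n → ℂ) → ℂ, Differentiable ℂ f →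
      HPhiNorm Φ f ≤ C * HPhiNorm (weight L P) f) (x : Fin n → ℂ) :
    weight L P x ≤ Φ x := by
  by_contra! hlt
  set c := ∫⁻ y, ENNReal.ofReal (Real.exp (-(2 * π) * leviForm L y))
  have hc : c ≠ ⊤ := (integrable_exp_neg_mul_leviForm hL two_pi_pos).lintegral_lt_top.ne
  have hle (t : ℝ) : HPhiNormSq Φ (coherentState L P (t • x)) ≤ C ^ 2 * c := by
    have h := pow_le_pow_left' (hbound _ (differentiable_coherentState L P (t • x))) 2
    rwa [mul_pow, hPhiNorm_sq, hPhiNorm_sq, hPhiNormSq_coherentState_self hL.isHermitian] at h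
  have htop := tendsto_hPhiNormSq_coherentState_smul_nhds_top hL.isHermitian P hΦ hhom hlt
  exact ENNReal.mul_ne_top (ENNReal.pow_ne_top hC) hc (top_le_iff.1 (le_of_tendsto' htop hle))

end CoherentState

theorem embedding_bounded_iff_le_general {n : ℕ} {L P : Matrix (Fin n) (Fin n) ℂ}
    (hL : L.PosDef) {Φ : (Fin n → ℂ) → ℝ} (hΦ : Continuous Φ)
    (hhom : ∀ (t : ℝ) x, 0 < t → Φ (t • x) = t ^ 2 * Φ x) :
    (∃ C : ℝ, 0 < C ∧ ∀ f : (Fin n → ℂ) → ℂ, Differentiable ℂ f →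
        HPhiNorm Φ f ≤ ENNReal.ofReal C * HPhiNorm (weight L P) f) ↔
      ∀ x, weight L P x ≤ Φ x := by
  constructor
  · rintro ⟨C, -, hC⟩
    exact weight_le_of_hPhiNorm_le hL hΦ hhom ENNReal.ofReal_ne_top hC
  · intro hle
    refine ⟨1, one_pos, fun f _ => ?_⟩
    simpa using antitone_hPhiNorm f hle

/-- the embedding H_{Φ₁} ⊆ H_{Φ₂} is bounded iff Φ₁ ≤ Φ₂. -/
theorem embedding_bounded_iff_le (n : ℕ) (hn : 1 ≤ n)
    (L₁ P₁ L₂ P₂ : Matrix (Fin n) (Fin n) ℂ)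
    (hL₁ : L₁.PosDef) (hL₂ : L₂.PosDef) (hP₁ : P₁.IsSymm) (hP₂ : P₂.IsSymm) :
    (∃ C : ℝ, 0 < C ∧ ∀ f : (Fin n → ℂ) → ℂ, Differentiable ℂ f →
        HPhiNorm (weight L₂ P₂) f ≤ ENNReal.ofReal C * HPhiNorm (weight L₁ P₁) f) ↔
      ∀ x, weight L₁ P₁ x ≤ weight L₂ P₂ x := by
  exact embedding_bounded_iff_le_general hL₁ (continuous_weight L₂ P₂)
    fun t x _ => weight_smul L₂ P₂ t x

end
end

section
/- Let Φ₁, Φ₂ : ℂⁿ → ℝ be real-quadratic weights with positive definite Levi matrices, and assume Φ₁(x) ≤ Φ₂(x) for all x ∈ ℂⁿ. Then there exist real numbers μ₁, …, μₙ ∈ (0, 1] such that, counted with algebraic multiplicity, the eigenvalues of the 2n×2n complex matrix 𝐀_{Φ₂}⁻¹𝐀_{Φ₁} are exactly μ₁, …, μₙ together with μ₁⁻¹, …, μₙ⁻¹; that is, the multiset of roots of its characteristic polynomial is {μ₁, …, μₙ, μ₁⁻¹, …, μₙ⁻¹}. -/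
open MeasureTheory Real Matrix
open scoped ENNReal ComplexOrder

noncomputable section

/-!
Since `𝐀_Φ · conj 𝐀_Φ = 1`, the complex conjugate of `𝐀_{Φ₂}⁻¹𝐀_{Φ₁}` is similar to its inverse,
so the pairing `μ, μ⁻¹` follows once every eigenvalue is known to be positive. The matrix
`H_Φ` of the form `X ↦ i σ(X̄, 𝐀_Φ X)` is Hermitian, and it is a Schur complement in a block matrix
which depends affinely on `(L, P)`. Hence `Φ₁ ≤ Φ₂` implies `H_{Φ₁} ≤ H_{Φ₂}`. In coordinates
`X = (x, ξ)`, `H_{Φ₁}` is positive definite on `U = {ξ = -iP₁x}` and `H_{Φ₂}` is negative definite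
on the complementary space `W = {x = 0}`, so by monotonicity both forms have both properties, and so
does `H_{Φ₁} + r H_{Φ₂}` for `r ≥ 0`; in particular it is nonsingular, which excludes eigenvalues
`-r ≤ 0`. A nonreal eigenvalue `z` would have an eigenvector isotropic for both forms, hence in the
kernel of the semidefinite `H_{Φ₂} - H_{Φ₁}`, forcing `z = 1`.
-/

section CharpolyRoots

open Polynomial

lemma roots_reverse_X_sub_C {K : Type*} [Field K] {a : K} (ha : a ≠ 0) :
    (X - C a).reverse.roots = {a⁻¹} := by
  have hX : (X : K[X]).reverse = C 1 := by
    rw [← one_mul X, reverse_mul_X, ← C_1, reverse_C]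
  have hrev : (X - C a).reverse = C (-a) * X + C 1 := by
    rw [sub_eq_add_neg, ← C_neg, reverse_add_C, natDegree_X, pow_one, hX, add_comm]
  rw [hrev, roots_C_mul_X_add_C _ (neg_ne_zero.2 ha), inv_neg, neg_mul, neg_neg, mul_one]

lemma roots_reverse_prod_X_sub_C {K : Type*} [Field K] {s : Multiset K} (hs : (0 : K) ∉ s) :
    (s.map fun a => X - C a).prod.reverse.roots = s.map (·⁻¹) := by
  induction s using Multiset.induction_on with
  | empty =>
    rw [Multiset.map_zero, Multiset.prod_zero, ← C_1, reverse_C, roots_C, Multiset.map_zero]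
  | cons a s ih =>
    rw [Multiset.mem_cons, not_or] at hs
    have hne : (X - C a).reverse * (s.map fun a => X - C a).prod.reverse ≠ 0 :=
      mul_ne_zero (reverse_eq_zero.not.2 (X_sub_C_ne_zero a))
        (reverse_eq_zero.not.2 (monic_multisetProd_X_sub_C s).ne_zero)
    rw [Multiset.map_cons, Multiset.prod_cons, reverse_mul_of_domain, roots_mul hne,
      roots_reverse_X_sub_C (Ne.symm hs.1), ih hs.2, Multiset.map_cons, Multiset.singleton_add]

lemma roots_reverse_eq_zero {K : Type*} [Field K] {p : K[X]} (hp : p.roots = 0) :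
    p.reverse.roots = 0 := by
  rcases eq_or_ne p 0 with rfl | hp0
  · simp
  refine Multiset.eq_zero_of_forall_notMem fun x hx => ?_
  have hroot : p.reverse.eval x = 0 := isRoot_of_mem_roots hx
  have hx0 : x ≠ 0 := by
    rintro rfl
    rw [← coeff_zero_eq_eval_zero, coeff_zero_reverse, leadingCoeff_eq_zero] at hroot
    exact hp0 hroot
  let _ : Invertible x⁻¹ := invertibleOfNonzero (inv_ne_zero hx0)
  have hinv : p.eval x⁻¹ = 0 := (eval₂_reverse_eq_zero_iff (RingHom.id K) x⁻¹ p).1 <| by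
    rwa [invOf_eq_inv, inv_inv]
  simpa [hp] using (mem_roots hp0).2 hinv

lemma roots_reverse {K : Type*} [Field K] {p : K[X]} (hp : p.coeff 0 ≠ 0) :
    p.reverse.roots = p.roots.map (·⁻¹) := by
  have hp0 : p ≠ 0 := by
    rintro rfl
    simp at hp
  have h0 : (0 : K) ∉ p.roots := fun h =>
    hp ((coeff_zero_eq_eval_zero p).trans (isRoot_of_mem_roots h))
  obtain ⟨q, hpq, -, hq⟩ := exists_prod_multiset_X_sub_C_mul p
  have hrev : (p.roots.map fun a => X - C a).prod.reverse * q.reverse = p.reverse := by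
    rw [← reverse_mul_of_domain, hpq]
  rw [← hrev, roots_mul (hrev ▸ reverse_eq_zero.not.2 hp0), roots_reverse_prod_X_sub_C h0,
    roots_reverse_eq_zero hq, add_zero]

lemma roots_charpoly_inv {ι K : Type*} [Fintype ι] [DecidableEq ι] [Field K]
    {A : Matrix ι ι K} (hA : IsUnit A) :
    A⁻¹.charpoly.roots = A.charpoly.roots.map (·⁻¹) := by
  have hdet : A.det ≠ 0 := ((isUnit_iff_isUnit_det A).1 hA).ne_zero
  have hcoeff : A.charpoly.coeff 0 ≠ 0 := fun h => hdet <| by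
    rw [det_eq_sign_charpoly_coeff, h, mul_zero]
  have hinv : A⁻¹.charpoly = C ((-1) ^ Fintype.card ι * A.det⁻¹) * A.charpoly.reverse := by
    simp [charpoly_inv A hA, reverse_charpoly]
  rw [hinv, roots_C_mul _ (by simpa using hdet), roots_reverse hcoeff]

lemma roots_charpoly_inv_mul_map_conj {ι : Type*} [Fintype ι] [DecidableEq ι]
    {M N : Matrix ι ι ℂ} (hM : M * conjM M = 1) (hN : N * conjM N = 1) :
    (N⁻¹ * M).charpoly.roots.map (starRingEnd ℂ) = (N⁻¹ * M).charpoly.roots.map (·⁻¹) := by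
  have hM' := isUnit_det_of_right_inverse hM
  have hN' := isUnit_det_of_right_inverse hN
  have hunit : IsUnit (N⁻¹ * M) := by
    rw [isUnit_iff_isUnit_det, det_mul]
    exact (isUnit_nonsing_inv_det N hN').mul hM'
  have hconj : (N⁻¹ * M).map (starRingEnd ℂ) = N * M⁻¹ := by
    rw [inv_eq_right_inv hM, inv_eq_right_inv hN, Matrix.map_mul]
    congr 1
    ext i j
    simp [conjM]
  rw [← (IsAlgClosed.splits _).roots_map, ← charpoly_map, hconj, charpoly_mul_comm,
    ← roots_charpoly_inv hunit, Matrix.mul_inv_rev, nonsing_inv_nonsing_inv N hN']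

lemma exists_mulVec_eq_smul_mulVec_of_mem_roots {ι K : Type*} [Fintype ι] [DecidableEq ι]
    [Field K] {M N : Matrix ι ι K} (hN : IsUnit N.det) {z : K}
    (hz : z ∈ (N⁻¹ * M).charpoly.roots) : ∃ v ≠ 0, M *ᵥ v = z • N *ᵥ v := by
  have hspec := mem_spectrum_of_isRoot_charpoly (isRoot_of_mem_roots hz)
  rw [← spectrum_toLin', ← Module.End.hasEigenvalue_iff_mem_spectrum] at hspec
  obtain ⟨v, hv⟩ := hspec.exists_hasEigenvector
  refine ⟨v, hv.2, ?_⟩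
  rw [← mulVec_smul, ← hv.apply_eq_smul, toLin'_apply, mulVec_mulVec,
    mul_nonsing_inv_cancel_left _ _ hN]

end CharpolyRoots

section Pairing

lemma exists_fin_map_eq {α : Type*} {n : ℕ} (s : Multiset α) (hs : s.card = n) :
    ∃ f : Fin n → α, Finset.univ.val.map f = s := by
  subst hs
  induction s using Quotient.inductionOn with
  | _ l => exact ⟨l.get, (Fin.univ_val_map _).trans (congrArg _ (List.ofFn_get l))⟩

lemma exists_eq_add_map_inv {K : Type*} [Field K] [LinearOrder K] [IsStrictOrderedRing K]
    {s : Multiset K} (hpos : ∀ x ∈ s, 0 < x) (hinv : s.map (·⁻¹) = s) (hcard : Even s.card) :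
    ∃ t : Multiset K, (∀ x ∈ t, x ∈ Set.Ioc 0 1) ∧ s = t + t.map (·⁻¹) := by
  have hgt : s.filter (1 < ·) = (s.filter (· < 1)).map (·⁻¹) := by
    conv_lhs => rw [← hinv, Multiset.filter_map]
    exact congrArg _ (Multiset.filter_congr fun x hx => one_lt_inv₀ (hpos x hx))
  have hsplit : s = s.filter (· < 1) + s.filter (1 < ·) + Multiset.replicate (s.count 1) 1 := by
    ext x
    rcases lt_trichotomy x 1 with h | rfl | h
    · simp [Multiset.count_replicate, h, h.not_gt, h.ne']
    · simp
    · simp [Multiset.count_replicate, h, h.not_gt, h.ne]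
  obtain ⟨k, hk⟩ : Even (s.count 1) := by
    rw [hsplit, hgt] at hcard
    simpa [Nat.even_add] using hcard
  refine ⟨s.filter (· < 1) + Multiset.replicate k 1, fun x hx => ?_, ?_⟩
  · rcases Multiset.mem_add.1 hx with h | h
    · obtain ⟨hxs, hx1⟩ := Multiset.mem_filter.1 h
      exact ⟨hpos x hxs, hx1.le⟩
    · rw [Multiset.eq_of_mem_replicate h]
      exact ⟨one_pos, le_rfl⟩
  · conv_lhs => rw [hsplit, hk, hgt, Multiset.replicate_add]
    rw [Multiset.map_add, Multiset.map_replicate, inv_one]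
    abel

lemma exists_pairing {n : ℕ} {s : Multiset ℂ} (hpos : ∀ z ∈ s, 0 < z)
    (hinv : s.map (·⁻¹) = s) (hcard : s.card = n + n) :
    ∃ μ : Fin n → ℝ, (∀ j, μ j ∈ Set.Ioc (0 : ℝ) 1) ∧
      s = Finset.univ.val.map (fun j => (μ j : ℂ)) +
        Finset.univ.val.map (fun j => ((μ j : ℂ))⁻¹) := by
  lift s to Multiset ℝ using fun z hz => (Complex.pos_iff.1 (hpos z hz)).2.symm
  have hpos' : ∀ x ∈ s, 0 < x := fun x hx => by simpa using hpos x (Multiset.mem_map_of_mem _ hx)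
  have hinv' : s.map (·⁻¹) = s := by
    apply Multiset.map_injective Complex.ofReal_injective
    simpa [Function.comp_def] using hinv
  rw [Multiset.card_map] at hcard
  obtain ⟨t, ht, rfl⟩ := exists_eq_add_map_inv hpos' hinv' ⟨n, hcard⟩
  obtain ⟨μ, rfl⟩ := exists_fin_map_eq t (n := n) (by simp at hcard; omega)
  refine ⟨μ, fun j => ht _ (Multiset.mem_map_of_mem _ (Finset.mem_univ j)), ?_⟩
  simp [Function.comp_def]

end Pairing

section Pencil

variable {ι 𝕜 : Type*} [Fintype ι] [RCLike 𝕜] {A B N : Matrix ι ι 𝕜} {U W : Submodule 𝕜 (ι → 𝕜)}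

lemma star_dotProduct_mulVec_of_isHermitian (hN : N.IsHermitian) (v w : ι → 𝕜) :
    star (star v ⬝ᵥ N *ᵥ w) = star w ⬝ᵥ N *ᵥ v := by
  rw [star_dotProduct, star_star, star_mulVec, hN.eq, dotProduct_mulVec]

/-- The Hermitian form of `N` is positive definite on `U` and negative definite on `W`. For
complementary `U` and `W` this says that the form is nondegenerate with signature
`(dim U, dim W)`. -/
structure IsDefiniteSplitting (N : Matrix ι ι 𝕜) (U W : Submodule 𝕜 (ι → 𝕜)) : Prop where
  isHermitian : N.IsHermitian
  pos : ∀ u ∈ U, u ≠ 0 → 0 < star u ⬝ᵥ N *ᵥ u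
  neg : ∀ w ∈ W, w ≠ 0 → star w ⬝ᵥ N *ᵥ w < 0

namespace IsDefiniteSplitting

lemma add_smul (hA : IsDefiniteSplitting A U W) (hB : IsDefiniteSplitting B U W) {r : ℝ}
    (hr : 0 ≤ r) : IsDefiniteSplitting (A + r • B) U W where
  isHermitian := hA.isHermitian.add (hB.isHermitian.smul (IsSelfAdjoint.all r))
  pos u hu hu0 := by
    rw [add_mulVec, dotProduct_add, smul_mulVec, dotProduct_smul]
    exact add_pos_of_pos_of_nonneg (hA.pos u hu hu0) (smul_nonneg hr (hB.pos u hu hu0).le)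
  neg w hw hw0 := by
    rw [add_mulVec, dotProduct_add, smul_mulVec, dotProduct_smul]
    exact add_neg_of_neg_of_nonpos (hA.neg w hw hw0)
      (smul_nonpos_of_nonneg_of_nonpos hr (hB.neg w hw hw0).le)

lemma eq_zero_of_mulVec_eq_zero (hN : IsDefiniteSplitting N U W) (hUW : Codisjoint U W)
    {v : ι → 𝕜} (hv : N *ᵥ v = 0) : v = 0 := by
  obtain ⟨u, hu, w, hw, rfl⟩ := Submodule.mem_sup.1 (hUW.eq_top ▸ Submodule.mem_top (x := v))
  have hsymm := star_dotProduct_mulVec_of_isHermitian hN.isHermitian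
  have huu : star u ⬝ᵥ N *ᵥ u = -(star u ⬝ᵥ N *ᵥ w) := by
    rw [eq_neg_iff_add_eq_zero, ← dotProduct_add, ← mulVec_add, hv, dotProduct_zero]
  have hww : star w ⬝ᵥ N *ᵥ w = -(star w ⬝ᵥ N *ᵥ u) := by
    rw [eq_neg_iff_add_eq_zero, add_comm, ← dotProduct_add, ← mulVec_add, hv, dotProduct_zero]
  have heq : star u ⬝ᵥ N *ᵥ u = star w ⬝ᵥ N *ᵥ w := by
    rw [hww, ← hsymm u w, ← star_neg, ← huu, hsymm]
  have hw_nonpos : star w ⬝ᵥ N *ᵥ w ≤ 0 := by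
    rcases eq_or_ne w 0 with rfl | hw0
    · simp
    · exact (hN.neg w hw hw0).le
  have hu0 : u = 0 := by_contra fun h => ((hN.pos u hu h).trans_le (heq.trans_le hw_nonpos)).false
  have hw0 : w = 0 := by_contra fun h => (hN.neg w hw h).ne (by rw [← heq, hu0]; simp)
  rw [hu0, hw0, add_zero]

lemma conj_eq_of_mulVec_eq_smul (hA : A.IsHermitian) (hB : IsDefiniteSplitting B U W)
    (hUW : Codisjoint U W) (hAB : (B - A).PosSemidef) {z : 𝕜} {v : ι → 𝕜} (hv : v ≠ 0)
    (hz : A *ᵥ v = z • B *ᵥ v) : star z = z := by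
  have hquad : star v ⬝ᵥ A *ᵥ v = z * (star v ⬝ᵥ B *ᵥ v) := by
    rw [hz, dotProduct_smul, smul_eq_mul]
  rcases eq_or_ne (star v ⬝ᵥ B *ᵥ v) 0 with hB0 | hB0
  · have hBA : B *ᵥ v = A *ᵥ v := by
      rw [← sub_eq_zero, ← sub_mulVec, ← hAB.dotProduct_mulVec_zero_iff, sub_mulVec,
        dotProduct_sub, hquad, hB0, mul_zero, sub_zero]
    have hBv : B *ᵥ v ≠ 0 := fun h => hv (hB.eq_zero_of_mulVec_eq_zero hUW h)
    have hz1 : z = 1 := smul_left_injective 𝕜 hBv (by simpa [hBA] using hz.symm)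
    rw [hz1, star_one]
  · have hstar := congrArg star hquad
    rw [star_mul', star_dotProduct_mulVec_of_isHermitian hA,
      star_dotProduct_mulVec_of_isHermitian hB.isHermitian, hquad] at hstar
    exact (mul_right_cancel₀ hB0 hstar).symm

lemma pos_of_mulVec_eq_smul (hA : IsDefiniteSplitting A U W) (hB : IsDefiniteSplitting B U W)
    (hUW : Codisjoint U W) (hAB : (B - A).PosSemidef) {z : 𝕜} {v : ι → 𝕜} (hv : v ≠ 0)
    (hz : A *ᵥ v = z • B *ᵥ v) : 0 < z := by
  obtain ⟨r, rfl⟩ := RCLike.conj_eq_iff_real.1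
    (conj_eq_of_mulVec_eq_smul hA.isHermitian hB hUW hAB hv hz)
  rw [RCLike.ofReal_pos]
  refine not_le.1 fun hr => hv ((hA.add_smul hB (neg_nonneg.2 hr)).eq_zero_of_mulVec_eq_zero hUW ?_)
  rw [add_mulVec, smul_mulVec, hz, neg_smul, RCLike.real_smul_eq_coe_smul (K := 𝕜), add_neg_cancel]

end IsDefiniteSplitting

lemma isDefiniteSplitting_of_sub_posSemidef (hA : A.IsHermitian) (hB : B.IsHermitian)
    (hAB : (B - A).PosSemidef) (hpos : ∀ u ∈ U, u ≠ 0 → 0 < star u ⬝ᵥ A *ᵥ u)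
    (hneg : ∀ w ∈ W, w ≠ 0 → star w ⬝ᵥ B *ᵥ w < 0) :
    IsDefiniteSplitting A U W ∧ IsDefiniteSplitting B U W := by
  have hle : ∀ v, star v ⬝ᵥ A *ᵥ v ≤ star v ⬝ᵥ B *ᵥ v := fun v => by
    simpa [sub_mulVec, dotProduct_sub] using hAB.dotProduct_mulVec_nonneg v
  exact ⟨⟨hA, hpos, fun w hw hw0 => (hle w).trans_lt (hneg w hw hw0)⟩,
    ⟨hB, fun u hu hu0 => (hpos u hu hu0).trans_le (hle u), hneg⟩⟩

lemma codisjoint_ker_fromCols_one {R m k : Type*} [CommRing R] [Fintype m] [Fintype k]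
    [DecidableEq k] (Q : Matrix k m R) :
    Codisjoint (fromCols Q 1).mulVecLin.ker
      (LinearMap.funLeft R R (Sum.inl : m → m ⊕ k)).ker := by
  refine codisjoint_iff_le_sup.2 fun v _ => Submodule.mem_sup.2
    ⟨Sum.elim (v ∘ Sum.inl) (-(Q *ᵥ (v ∘ Sum.inl))), ?_,
      Sum.elim 0 (fromCols Q 1 *ᵥ v), ?_, ?_⟩
  · simp [fromCols_mulVec]
  · rfl
  · ext (i | i) <;> simp [fromCols_mulVec]

end Pencil

section SchurComplement

variable {m k 𝕜 : Type*} [Fintype m] [DecidableEq m] [Finite k] [RCLike 𝕜]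

lemma posSemidef_schurComplement_sub {A₁ A₂ : Matrix m m 𝕜} {B₁ B₂ : Matrix m k 𝕜}
    {D₁ D₂ : Matrix k k 𝕜} (hA₁ : A₁.PosDef) (hA₂ : A₂.PosDef)
    (hle : (fromBlocks A₂ B₂ B₂ᴴ D₂ - fromBlocks A₁ B₁ B₁ᴴ D₁).PosSemidef) :
    ((D₂ - B₂ᴴ * A₂⁻¹ * B₂) - (D₁ - B₁ᴴ * A₁⁻¹ * B₁)).PosSemidef := by
  -- Replacing `D₁` by `B₁ᴴ * A₁⁻¹ * B₁` in the first block matrix makes its Schur complement zero;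
  -- adding `hle` then gives a block matrix whose Schur complement is the asserted difference.
  let _ := Fintype.ofFinite k
  let _ := hA₁.isUnit.invertible
  let _ := hA₂.isUnit.invertible
  have hmin : (fromBlocks A₁ B₁ B₁ᴴ (B₁ᴴ * A₁⁻¹ * B₁)).PosSemidef := by
    rw [hA₁.fromBlocks₁₁, sub_self]
    exact .zero
  have hsum : fromBlocks A₁ B₁ B₁ᴴ (B₁ᴴ * A₁⁻¹ * B₁) +
      (fromBlocks A₂ B₂ B₂ᴴ D₂ - fromBlocks A₁ B₁ B₁ᴴ D₁) =
        fromBlocks A₂ B₂ B₂ᴴ (D₂ - (D₁ - B₁ᴴ * A₁⁻¹ * B₁)) := by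
    rw [sub_eq_add_neg, fromBlocks_neg, fromBlocks_add, fromBlocks_add]
    congr 1 <;> abel
  have h := (hA₂.fromBlocks₁₁ _ _).1 (hsum ▸ hmin.add hle)
  rwa [sub_right_comm] at h

end SchurComplement

section Weight

variable {n : ℕ} {L P : Matrix (Fin n) (Fin n) ℂ}

lemma conjM_eq_transpose {m : Type*} {M : Matrix m m ℂ} (hM : M.IsHermitian) : conjM M = Mᵀ :=
  ext fun i j => hM.apply j i

lemma conjM_eq_conjTranspose {m : Type*} {M : Matrix m m ℂ} (hM : M.IsSymm) : conjM M = Mᴴ := by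
  rw [conjTranspose, hM.eq]
  rfl

lemma conjM_mul {m : Type*} [Fintype m] (M N : Matrix m m ℂ) :
    conjM (M * N) = conjM M * conjM N :=
  Matrix.map_mul

lemma Amat_eq_mul_fromBlocks_mul (L P : Matrix (Fin n) (Fin n) ℂ) :
    Amat L P = fromBlocks 1 0 (Complex.I • conjM P) 1 *
      fromBlocks 0 (Complex.I • conjM L⁻¹) (Complex.I • L) 0 *
        fromBlocks 1 0 (Complex.I • P) 1 := by
  simp only [Amat, conjM_mul, fromBlocks_multiply]
  simp [smul_smul, sub_eq_add_neg, add_comm, mul_assoc]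

lemma Amat_mul_conjM (hL : IsUnit L.det) : Amat L P * conjM (Amat L P) = 1 := by
  have hsmul (Q : Matrix (Fin n) (Fin n) ℂ) : conjM (Complex.I • Q) = -(Complex.I • conjM Q) := by
    ext; simp [conjM]
  have hconj (Q : Matrix (Fin n) (Fin n) ℂ) : conjM (conjM Q) = Q := by
    ext; simp [conjM]
  have hzero : conjM (0 : Matrix (Fin n) (Fin n) ℂ) = 0 := map_zero (starRingEnd ℂ).mapMatrix
  have hone : conjM (1 : Matrix (Fin n) (Fin n) ℂ) = 1 := map_one (starRingEnd ℂ).mapMatrix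
  have hblocks (A B C D : Matrix (Fin n) (Fin n) ℂ) : conjM (fromBlocks A B C D) =
      fromBlocks (conjM A) (conjM B) (conjM C) (conjM D) := fromBlocks_map ..
  have hinv : conjM L⁻¹ * conjM L = 1 := by rw [← conjM_mul, nonsing_inv_mul L hL, hone]
  set S := fun Q : Matrix (Fin n) (Fin n) ℂ =>
    (fromBlocks 1 0 (Complex.I • Q) 1 : Matrix (Fin n ⊕ Fin n) (Fin n ⊕ Fin n) ℂ) with hS
  have hshear (Q : Matrix (Fin n) (Fin n) ℂ) : S Q * conjM (S (conjM Q)) = 1 := by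
    simp [hS, hblocks, hsmul, hconj, hone, hzero, fromBlocks_multiply]
  set M := fromBlocks 0 (Complex.I • conjM L⁻¹) (Complex.I • L) 0 with hM
  have hmid : M * conjM M = 1 := by
    simp [hM, hblocks, hsmul, hconj, hzero, fromBlocks_multiply, smul_smul, hinv,
      mul_nonsing_inv L hL]
  calc Amat L P * conjM (Amat L P)
      = S (conjM P) * (M * (S P * conjM (S (conjM P))) * conjM M) * conjM (S P) := by
        simp only [Amat_eq_mul_fromBlocks_mul, conjM_mul, hS, hM, mul_assoc]
    _ = 1 := by
        rw [hshear, mul_one, hmid, mul_one]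
        simpa only [hconj] using hshear (conjM P)

lemma weight_sub (L₁ P₁ L₂ P₂ : Matrix (Fin n) (Fin n) ℂ) (x : Fin n → ℂ) :
    weight (L₂ - L₁) (P₂ - P₁) x = weight L₂ P₂ x - weight L₁ P₁ x := by
  simp only [weight, dotC, sub_mulVec, Pi.sub_apply, sub_mul, Finset.sum_sub_distrib,
    Complex.sub_re]
  ring

lemma weight_add_add_weight_I_smul_sub (hP : P.IsSymm) (a b : Fin n → ℂ) :
    weight L P (a + b) + weight L P (Complex.I • (a - b)) =
      (star a ⬝ᵥ L *ᵥ a).re + (star b ⬝ᵥ L *ᵥ b).re + 2 * (b ⬝ᵥ P *ᵥ a).re := by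
  have hdot (u v : Fin n → ℂ) : dotC u v = v ⬝ᵥ u := dotProduct_comm u v
  have hsymm : a ⬝ᵥ P *ᵥ b = b ⬝ᵥ P *ᵥ a := by
    rw [dotProduct_mulVec, dotProduct_comm, ← mulVec_transpose, hP.eq]
  simp only [weight, hdot, star_add, star_sub, star_smul, mulVec_add, mulVec_sub, mulVec_smul,
    add_dotProduct, dotProduct_add, sub_dotProduct, dotProduct_sub, smul_dotProduct,
    dotProduct_smul, hsymm, smul_eq_mul, Complex.star_def, Complex.conj_I, Complex.add_re,
    Complex.sub_re, Complex.sub_im, Complex.mul_re, Complex.mul_im, Complex.neg_re,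
    Complex.neg_im, Complex.I_re, Complex.I_im]
  ring

lemma posSemidef_complexHessian (hL : L.IsHermitian) (hP : P.IsSymm)
    (hweight : ∀ x, 0 ≤ weight L P x) : (fromBlocks L Pᴴ P Lᵀ).PosSemidef := by
  have hH : (fromBlocks L Pᴴ P Lᵀ).IsHermitian :=
    hL.fromBlocks (conjTranspose_conjTranspose P) hL.transpose
  refine .of_dotProduct_mulVec_nonneg hH fun v => ?_
  obtain ⟨a, b, rfl⟩ : ∃ a b, v = Sum.elim a (star b) :=
    ⟨v ∘ Sum.inl, star (v ∘ Sum.inr), by simp⟩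
  have hLb : b ⬝ᵥ Lᵀ *ᵥ star b = star b ⬝ᵥ L *ᵥ b := by
    rw [mulVec_transpose, dotProduct_comm, dotProduct_mulVec]
  have hPb : star a ⬝ᵥ Pᴴ *ᵥ star b = star (b ⬝ᵥ P *ᵥ a) := by
    rw [dotProduct_mulVec, ← star_mulVec, ← star_dotProduct_star, dotProduct_comm]
  have hre : (star (Sum.elim a (star b)) ⬝ᵥ fromBlocks L Pᴴ P Lᵀ *ᵥ Sum.elim a (star b)).re =
      weight L P (a + b) + weight L P (Complex.I • (a - b)) := by
    rw [weight_add_add_weight_I_smul_sub hP, Function.star_sumElim, star_star,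
      fromBlocks_mulVec, sumElim_dotProduct_sumElim]
    simp only [Sum.elim_comp_inl, Sum.elim_comp_inr, dotProduct_add, hLb, hPb, Complex.add_re,
      Complex.star_def, Complex.conj_re]
    ring
  refine Complex.nonneg_iff.2 ⟨?_, (hH.im_star_dotProduct_mulVec_self _).symm⟩
  rw [hre]
  exact add_nonneg (hweight _) (hweight _)

/-- The matrix of the Hermitian form `X ↦ i σ(X̄, 𝐀_Φ X)`, where `σ` is the complex symplectic form
on `ℂ²ⁿ`. -/
def hermMat (L P : Matrix (Fin n) (Fin n) ℂ) : Matrix (Fin n ⊕ Fin n) (Fin n ⊕ Fin n) ℂ :=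
  Complex.I • (J (Fin n) ℂ * Amat L P)

lemma hermMat_eq_schurComplement (hL : L.IsHermitian) (hP : P.IsSymm) :
    hermMat L P = fromBlocks L 0 0 0 -
      (fromCols (Complex.I • P) 1)ᴴ * Lᵀ⁻¹ * fromCols (Complex.I • P) 1 := by
  have hL' : conjM L⁻¹ = Lᵀ⁻¹ := by rw [conjM_eq_transpose hL.inv, transpose_nonsing_inv]
  have hH : hermMat L P = fromBlocks (L - Pᴴ * Lᵀ⁻¹ * P) (Complex.I • (Pᴴ * Lᵀ⁻¹))
      (-(Complex.I • (Lᵀ⁻¹ * P))) (-Lᵀ⁻¹) := by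
    simp [hermMat, J, Amat, fromBlocks_multiply, fromBlocks_smul, conjM_mul, hL',
      conjM_eq_conjTranspose hP, smul_smul]
  rw [hH, conjTranspose_fromCols_eq_fromRows_conjTranspose, fromRows_mul, fromRows_mul_fromCols,
    eq_sub_iff_add_eq, fromBlocks_add]
  simp [smul_smul]

lemma isHermitian_hermMat (hL : L.IsHermitian) (hP : P.IsSymm) : (hermMat L P).IsHermitian := by
  rw [hermMat_eq_schurComplement hL hP]
  exact (hL.fromBlocks conjTranspose_zero isHermitian_zero).sub
    (isHermitian_conjTranspose_mul_mul _ hL.transpose.inv)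

lemma star_dotProduct_hermMat_mulVec (hL : L.IsHermitian) (hP : P.IsSymm)
    (v : Fin n ⊕ Fin n → ℂ) :
    star v ⬝ᵥ hermMat L P *ᵥ v = star (v ∘ Sum.inl) ⬝ᵥ L *ᵥ (v ∘ Sum.inl) -
      star (fromCols (Complex.I • P) 1 *ᵥ v) ⬝ᵥ Lᵀ⁻¹ *ᵥ (fromCols (Complex.I • P) 1 *ᵥ v) := by
  rw [hermMat_eq_schurComplement hL hP, sub_mulVec, dotProduct_sub, star_mulVec,
    ← dotProduct_mulVec, mulVec_mulVec, mulVec_mulVec]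
  congr 1
  nth_rw 1 [← Sum.elim_comp_inl_inr v]
  rw [Function.star_sumElim, fromBlocks_mulVec, sumElim_dotProduct_sumElim]
  simp

lemma star_dotProduct_hermMat_mulVec_pos (hL : L.PosDef) (hP : P.IsSymm) {v : Fin n ⊕ Fin n → ℂ}
    (hv : fromCols (Complex.I • P) 1 *ᵥ v = 0) (hv0 : v ≠ 0) :
    0 < star v ⬝ᵥ hermMat L P *ᵥ v := by
  rw [star_dotProduct_hermMat_mulVec hL.isHermitian hP, hv, mulVec_zero, dotProduct_zero, sub_zero]
  refine hL.dotProduct_mulVec_pos fun hinl => hv0 ?_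
  rw [fromCols_mulVec, hinl, mulVec_zero, zero_add, one_mulVec] at hv
  rw [← Sum.elim_comp_inl_inr v, hinl, hv, Sum.elim_zero_zero]

lemma star_dotProduct_hermMat_mulVec_neg (hL : L.PosDef) (hP : P.IsSymm) {v : Fin n ⊕ Fin n → ℂ}
    (hv : v ∘ Sum.inl = 0) (hv0 : v ≠ 0) : star v ⬝ᵥ hermMat L P *ᵥ v < 0 := by
  rw [star_dotProduct_hermMat_mulVec hL.isHermitian hP, hv, mulVec_zero, dotProduct_zero, zero_sub,
    fromCols_mulVec, hv, mulVec_zero, zero_add, one_mulVec, Left.neg_neg_iff]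
  refine hL.transpose.inv.dotProduct_mulVec_pos fun hinr => hv0 ?_
  rw [← Sum.elim_comp_inl_inr v, hv, hinr, Sum.elim_zero_zero]

variable {L₁ P₁ L₂ P₂ : Matrix (Fin n) (Fin n) ℂ}

lemma posSemidef_hermMat_sub (hL₁ : L₁.PosDef) (hL₂ : L₂.PosDef) (hP₁ : P₁.IsSymm)
    (hP₂ : P₂.IsSymm) (hle : ∀ x, weight L₁ P₁ x ≤ weight L₂ P₂ x) :
    (hermMat L₂ P₂ - hermMat L₁ P₁).PosSemidef := by
  have hHess : (fromBlocks (L₂ - L₁) (P₂ - P₁)ᴴ (P₂ - P₁) (L₂ - L₁)ᵀ).PosSemidef :=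
    posSemidef_complexHessian (hL₂.isHermitian.sub hL₁.isHermitian) (hP₂.sub hP₁) fun x => by
      rw [weight_sub]
      exact sub_nonneg.2 (hle x)
  -- The difference of the block matrices sees `(y, (x, ξ))` only through `(x, -iy)`.
  let T : Matrix (Fin n ⊕ Fin n) (Fin n ⊕ (Fin n ⊕ Fin n)) ℂ :=
    fromBlocks 0 (fromCols 1 0) (-(Complex.I • 1)) 0
  have hT : Tᴴ * fromBlocks (L₂ - L₁) (P₂ - P₁)ᴴ (P₂ - P₁) (L₂ - L₁)ᵀ * T =
      fromBlocks L₂ᵀ (fromCols (Complex.I • P₂) 1) (fromCols (Complex.I • P₂) 1)ᴴ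
          (fromBlocks L₂ 0 0 0) -
        fromBlocks L₁ᵀ (fromCols (Complex.I • P₁) 1) (fromCols (Complex.I • P₁) 1)ᴴ
          (fromBlocks L₁ 0 0 0) := by
    ext (i | i | i) (j | j | j) <;>
      simp [T, fromBlocks_conjTranspose, fromBlocks_multiply, fromRows_mul,
        conjTranspose_fromCols_eq_fromRows_conjTranspose, mul_add, ← mul_assoc, sub_eq_add_neg,
        add_comm]
  rw [hermMat_eq_schurComplement hL₁.isHermitian hP₁,
    hermMat_eq_schurComplement hL₂.isHermitian hP₂]
  exact posSemidef_schurComplement_sub hL₁.transpose hL₂.transpose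
    (hT ▸ hHess.conjTranspose_mul_mul_same T)

lemma pos_of_mem_roots_charpoly (hL₁ : L₁.PosDef) (hL₂ : L₂.PosDef) (hP₁ : P₁.IsSymm)
    (hP₂ : P₂.IsSymm) (hle : ∀ x, weight L₁ P₁ x ≤ weight L₂ P₂ x) {z : ℂ}
    (hz : z ∈ ((Amat L₂ P₂)⁻¹ * Amat L₁ P₁).charpoly.roots) : 0 < z := by
  have hunit := isUnit_det_of_right_inverse
    (Amat_mul_conjM (P := P₂) ((isUnit_iff_isUnit_det L₂).1 hL₂.isUnit))
  obtain ⟨v, hv0, hv⟩ := exists_mulVec_eq_smul_mulVec_of_mem_roots hunit hz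
  have hle' := posSemidef_hermMat_sub hL₁ hL₂ hP₁ hP₂ hle
  have hv' : hermMat L₁ P₁ *ᵥ v = z • hermMat L₂ P₂ *ᵥ v := by
    rw [hermMat, smul_mulVec, ← mulVec_mulVec, hv, hermMat, smul_mulVec, ← mulVec_mulVec,
      mulVec_smul, smul_comm]
  obtain ⟨h₁, h₂⟩ := isDefiniteSplitting_of_sub_posSemidef
    (U := (fromCols (Complex.I • P₁) 1).mulVecLin.ker)
    (W := (LinearMap.funLeft ℂ ℂ Sum.inl).ker)
    (isHermitian_hermMat hL₁.isHermitian hP₁) (isHermitian_hermMat hL₂.isHermitian hP₂) hle'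
    (fun u hu => star_dotProduct_hermMat_mulVec_pos hL₁ hP₁ hu)
    (fun w hw => star_dotProduct_hermMat_mulVec_neg hL₂ hP₂ hw)
  exact h₁.pos_of_mulVec_eq_smul h₂ (codisjoint_ker_fromCols_one _) hle' hv0 hv'

end Weight

/-- the eigenvalues of 𝐀_{Φ₂}⁻¹𝐀_{Φ₁} come in pairs μ_j, μ_j⁻¹ with μ_j ∈ (0,1]. -/
theorem eigenvalues_pairing (n : ℕ) (L₁ P₁ L₂ P₂ : Matrix (Fin n) (Fin n) ℂ)
    (hL₁ : L₁.PosDef) (hL₂ : L₂.PosDef) (hP₁ : P₁.IsSymm) (hP₂ : P₂.IsSymm)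
    (hle : ∀ x, weight L₁ P₁ x ≤ weight L₂ P₂ x) :
    ∃ μ : Fin n → ℝ, (∀ j, μ j ∈ Set.Ioc (0 : ℝ) 1) ∧
      ((Amat L₂ P₂)⁻¹ * Amat L₁ P₁).charpoly.roots =
        Finset.univ.val.map (fun j => (μ j : ℂ)) +
          Finset.univ.val.map (fun j => ((μ j : ℂ))⁻¹) := by
  have hpos := fun z => pos_of_mem_roots_charpoly hL₁ hL₂ hP₁ hP₂ hle (z := z)
  refine exists_pairing hpos ?_ ?_
  · rw [← roots_charpoly_inv_mul_map_conj
      (Amat_mul_conjM ((isUnit_iff_isUnit_det L₁).1 hL₁.isUnit))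
      (Amat_mul_conjM ((isUnit_iff_isUnit_det L₂).1 hL₂.isUnit))]
    refine (Multiset.map_congr rfl fun z hz => ?_).trans (Multiset.map_id _)
    exact Complex.conj_eq_iff_im.2 (Complex.pos_iff.1 (hpos z hz)).2.symm
  · rw [← (IsAlgClosed.splits _).natDegree_eq_card_roots, charpoly_natDegree_eq_dim,
      Fintype.card_sum, Fintype.card_fin]

end
end

section
/- Let Φ₁, Φ₂ : ℂⁿ → ℝ be real-quadratic weights with positive definite Levi matrices, and assume Φ₁(x) < Φ₂(x) for all x ∈ ℂⁿ \ {0}. Set M = 𝐀_{Φ₂}⁻¹𝐀_{Φ₁}. Then there exists an n×n complex symmetric matrix T such that {(x, Tx) : x ∈ ℂⁿ} = ⊕_{μ ∈ Spec(M), μ ∈ (0,1)} ker(M − μ); that is, the sum of the eigenspaces of M for eigenvalues lying in the real interval (0,1) is the graph of T. -/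
open MeasureTheory Real Matrix
open scoped ENNReal ComplexOrder

noncomputable section

/-!
The matrix `H_Φ = -i J 𝐀_Φ` is Hermitian, and completing a square gives
`⟨H_Φ (x, ξ), (x, ξ)⟩ = sup_y {2 Re (ξ · y) - Φ (x - iy) - Φ (ix - y)}`, a decreasing function of
`Φ`. Hence `Φ₁ < Φ₂` makes `D = H₁ - H₂` positive definite, and `D` and `H₂` can be diagonalized
simultaneously: `M = 𝐀₂⁻¹ 𝐀₁ = H₂⁻¹ (H₂ + D)` is diagonalizable with eigenvalues `1 + 1 / d`, where
`d` runs over the eigenvalues of `H₂` relative to `D`. Both `H₁` and `H₂` have signature `(n, n)`,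
so no `d` lies in `[-1, 0]` and exactly `n` are negative. These are the ones with
`1 + 1 / d ∈ (0, 1)`; on the sum of their eigenspaces `H₂` is negative, whereas it is nonnegative
on `{x = 0}`, so this `n`-dimensional space is a graph over `x`. It is isotropic because `M` is
symplectic and `μ ν ≠ 1` for `μ, ν ∈ (0, 1)`, and isotropic graphs are graphs of symmetric matrices.
-/

lemma finrank_span_image_setOf {R M ι : Type*} [Ring R] [StrongRankCondition R] [Nontrivial R]
    [AddCommGroup M] [Module R M] [Fintype ι] {v : ι → M} (hv : LinearIndependent R v)
    (p : ι → Prop) [DecidablePred p] :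
    Module.finrank R (Submodule.span R (v '' {i | p i})) = Fintype.card {i // p i} := by
  rw [Set.image_eq_range]
  exact finrank_span_eq_card (hv.comp _ Subtype.val_injective)

section Eigenbasis

variable {R E ι κ : Type*} [CommRing R] [NoZeroDivisors R] [AddCommGroup E] [Module R E]

lemma iSup_eigenspace_eq_span_image {f : Module.End R E} (b : Module.Basis ι R E) {a : ι → R}
    (hb : ∀ i, f (b i) = a i • b i) (μ : κ → R) (s : Set κ) :
    ⨆ k ∈ s, f.eigenspace (μ k) = Submodule.span R (b '' {i | a i ∈ μ '' s}) := by
  refine le_antisymm (iSup₂_le fun k hk v hv => ?_) (Submodule.span_le.mpr ?_)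
  · have hcoord (i) : b.coord i ∘ₗ f = a i • b.coord i := by
      classical
      refine b.ext fun j => ?_
      rcases eq_or_ne j i with rfl | hij
      · simp [hb]
      · simp [hb, Finsupp.single_eq_of_ne hij.symm]
    rw [b.mem_span_image]
    intro i hi
    have hvi : a i * b.repr v i = μ k * b.repr v i := by
      simpa [Module.End.mem_eigenspace_iff.mp hv] using (LinearMap.congr_fun (hcoord i) v).symm
    exact ⟨k, hk, (mul_right_cancel₀ (Finsupp.mem_support_iff.mp hi) hvi).symm⟩
  · rintro _ ⟨i, ⟨k, hk, hki⟩, rfl⟩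
    exact Submodule.mem_iSup_of_mem k <| Submodule.mem_iSup_of_mem hk <|
      Module.End.mem_eigenspace_iff.mpr <| hki ▸ hb i

end Eigenbasis

section Pencil

variable {𝕜 ι : Type*} [RCLike 𝕜] [Fintype ι] [DecidableEq ι]

/-- `b` is orthonormal for the Hermitian form `D` and consists of generalized eigenvectors, with
real eigenvalues `d`, of the matrix pencil `H - t D`. -/
structure IsPencilEigenbasis (D H : Matrix ι ι 𝕜) (b : Module.Basis ι 𝕜 (ι → 𝕜)) (d : ι → ℝ) :
    Prop where
  orthonormal : ∀ i j, star (b i) ⬝ᵥ D *ᵥ b j = if i = j then 1 else 0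
  mulVec_eq_smul : ∀ i, H *ᵥ b i = (d i : 𝕜) • D *ᵥ b i

open scoped MatrixOrder Matrix.Norms.L2Operator in
lemma exists_isPencilEigenbasis {D H : Matrix ι ι 𝕜} (hD : D.PosDef) (hH : H.IsHermitian) :
    ∃ b d, IsPencilEigenbasis D H b d := by
  obtain ⟨B, rfl⟩ := CStarAlgebra.nonneg_iff_eq_star_mul_self.mp hD.posSemidef.nonneg
  have hB : IsUnit B.det := (isUnit_iff_isUnit_det B).mp (isUnit_of_mul_isUnit_right hD.isUnit)
  have hN : (B⁻¹ᴴ * H * B⁻¹).IsHermitian := isHermitian_conjTranspose_mul_mul _ hH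
  set u := hN.eigenvectorBasis
  let b : Module.Basis ι 𝕜 (ι → 𝕜) := u.toBasis.map (WithLp.linearEquiv 2 𝕜 (ι → 𝕜) ≪≫ₗ
    (B.toLinearEquiv' (B.invertibleOfIsUnitDet hB)).symm)
  have hBb (i) : B *ᵥ b i = u i := by
    rw [Module.Basis.map_apply, u.coe_toBasis]
    exact (B.toLinearEquiv' (B.invertibleOfIsUnitDet hB)).apply_symm_apply (u i)
  have hb (i) : b i = B⁻¹ *ᵥ u i := by
    rw [← hBb, mulVec_mulVec, nonsing_inv_mul _ hB, one_mulVec]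
  have hBH : Bᴴ * B⁻¹ᴴ = 1 := by
    rw [← conjTranspose_mul, nonsing_inv_mul _ hB, conjTranspose_one]
  refine ⟨b, hN.eigenvalues, fun i j => ?_, fun i => ?_⟩
  · rw [star_eq_conjTranspose, ← mulVec_mulVec, dotProduct_mulVec, ← star_mulVec, hBb, hBb,
      dotProduct_comm, ← EuclideanSpace.inner_eq_star_dotProduct]
    exact orthonormal_iff_ite.mp u.orthonormal i j
  · calc H *ᵥ b i = (Bᴴ * B⁻¹ᴴ * H * B⁻¹) *ᵥ u i := by
          rw [hBH, Matrix.one_mul, hb, mulVec_mulVec]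
      _ = Bᴴ *ᵥ ((B⁻¹ᴴ * H * B⁻¹) *ᵥ u i) := by
          simp only [mulVec_mulVec, Matrix.mul_assoc]
      _ = (hN.eigenvalues i : 𝕜) • (Bᴴ * B) *ᵥ b i := by
          rw [hN.mulVec_eigenvectorBasis, ← hBb, ← mulVec_mulVec, mulVec_smul,
            RCLike.real_smul_eq_coe_smul (K := 𝕜)]

namespace IsPencilEigenbasis

variable {D H : Matrix ι ι 𝕜} {b : Module.Basis ι 𝕜 (ι → 𝕜)} {d : ι → ℝ}

lemma neg_add (hb : IsPencilEigenbasis D H b d) :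
    IsPencilEigenbasis D (-(H + D)) b fun i => -(d i + 1) where
  orthonormal := hb.orthonormal
  mulVec_eq_smul i := by
    rw [neg_mulVec, add_mulVec, hb.mulVec_eq_smul]
    push_cast
    module

lemma star_dotProduct_mulVec_self (hb : IsPencilEigenbasis D H b d) (v : ι → 𝕜) :
    star v ⬝ᵥ H *ᵥ v = ((∑ i, d i * ‖b.repr v i‖ ^ 2 : ℝ) : 𝕜) := by
  conv_lhs => rw [← b.sum_repr v]
  simp only [mulVec_sum, mulVec_smul, hb.mulVec_eq_smul, star_sum, star_smul, sum_dotProduct,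
    dotProduct_sum, smul_dotProduct, dotProduct_smul, hb.orthonormal, smul_eq_mul, mul_ite,
    mul_one, mul_zero, Finset.sum_ite_eq', Finset.mem_univ, if_true]
  push_cast
  refine Finset.sum_congr rfl fun i _ => ?_
  rw [← RCLike.mul_conj, starRingEnd_apply]
  ring

lemma eq_zero_of_mem_span_neg (hb : IsPencilEigenbasis D H b d) {v : ι → 𝕜}
    (hv : v ∈ Submodule.span 𝕜 (b '' {i | d i < 0})) (hvH : 0 ≤ RCLike.re (star v ⬝ᵥ H *ᵥ v)) :
    v = 0 := by
  rw [b.mem_span_image] at hv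
  rw [hb.star_dotProduct_mulVec_self, RCLike.ofReal_re] at hvH
  have hneg (i) (hi : b.repr v i ≠ 0) : d i < 0 := hv (Finsupp.mem_support_iff.mpr hi)
  have hle (i) (_ : i ∈ Finset.univ) : d i * ‖b.repr v i‖ ^ 2 ≤ 0 := by
    by_cases hi : b.repr v i = 0
    · simp [hi]
    · exact mul_nonpos_of_nonpos_of_nonneg (hneg i hi).le (sq_nonneg _)
  have hzero := (Finset.sum_eq_zero_iff_of_nonpos hle).mp (le_antisymm (Finset.sum_nonpos hle) hvH)
  refine b.ext_elem fun i => by_contra fun hi => ?_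
  have hi : b.repr v i ≠ 0 := by simpa using hi
  simpa [hi, (hneg i hi).ne] using hzero i (Finset.mem_univ i)

section Projection

variable {V : Type*} [AddCommGroup V] [Module 𝕜 V] {f : (ι → 𝕜) →ₗ[𝕜] V}

lemma injective_domRestrict_span_neg (hb : IsPencilEigenbasis D H b d)
    (hf : ∀ v, f v = 0 → 0 ≤ RCLike.re (star v ⬝ᵥ H *ᵥ v)) :
    Function.Injective (f.domRestrict (Submodule.span 𝕜 (b '' {i | d i < 0}))) :=
  (injective_iff_map_eq_zero _).mpr fun v hv =>
    Subtype.ext (hb.eq_zero_of_mem_span_neg v.2 (hf v hv))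

lemma card_neg_le_finrank [FiniteDimensional 𝕜 V] (hb : IsPencilEigenbasis D H b d)
    (hf : ∀ v, f v = 0 → 0 ≤ RCLike.re (star v ⬝ᵥ H *ᵥ v)) :
    Fintype.card {i // d i < 0} ≤ Module.finrank 𝕜 V :=
  finrank_span_image_setOf b.linearIndependent (d · < 0) ▸
    LinearMap.finrank_le_finrank_of_injective (hb.injective_domRestrict_span_neg hf)

end Projection

lemma ne_zero_of_isUnit (hb : IsPencilEigenbasis D H b d) (hH : IsUnit H) (i : ι) : d i ≠ 0 := by
  intro hi
  have hHb : H *ᵥ b i = 0 := by simp [hb.mulVec_eq_smul, hi]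
  exact b.ne_zero i (mulVec_injective_of_isUnit hH (by simpa using hHb))

lemma inv_mul_mulVec (hb : IsPencilEigenbasis D H b d) (hH : IsUnit H) (i : ι) :
    (H⁻¹ * (H + D)) *ᵥ b i = ((1 + (d i)⁻¹ : ℝ) : 𝕜) • b i := by
  have hd : (d i : 𝕜) ≠ 0 := by exact_mod_cast hb.ne_zero_of_isUnit hH i
  have hdet : IsUnit H.det := (isUnit_iff_isUnit_det H).mp hH
  have hDb : D *ᵥ b i = (d i : 𝕜)⁻¹ • H *ᵥ b i := by
    rw [hb.mulVec_eq_smul, inv_smul_smul₀ hd]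
  rw [Matrix.mul_add, nonsing_inv_mul _ hdet, add_mulVec, one_mulVec, ← mulVec_mulVec, hDb,
    mulVec_smul, mulVec_mulVec, nonsing_inv_mul _ hdet, one_mulVec]
  push_cast
  module

end IsPencilEigenbasis

lemma disjoint_and_card_eq_of_union_eq_univ {s t : Finset ι} (hst : s ∪ t = Finset.univ) {m n : ℕ}
    (hs : s.card ≤ m) (ht : t.card ≤ n) (hmn : m + n ≤ Fintype.card ι) :
    Disjoint s t ∧ s.card = m := by
  have h := Finset.card_union_add_card_inter s t
  rw [hst, Finset.card_univ] at h
  rw [Finset.disjoint_iff_inter_eq_empty, ← Finset.card_eq_zero]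
  lia

-- Sylvester's law of inertia in disguise: the kernels of `f` and `g` are so large that they leave
-- no room for an eigenvalue of the pencil in `(-1, 0)`.
lemma IsPencilEigenbasis.lt_neg_one_and_card_neg_eq {D H : Matrix ι ι 𝕜}
    {b : Module.Basis ι 𝕜 (ι → 𝕜)} {d : ι → ℝ} {V W : Type*}
    [AddCommGroup V] [Module 𝕜 V] [FiniteDimensional 𝕜 V]
    [AddCommGroup W] [Module 𝕜 W] [FiniteDimensional 𝕜 W]
    (hb : IsPencilEigenbasis D H b d) (hHD : IsUnit (H + D))
    {f : (ι → 𝕜) →ₗ[𝕜] V} (hf : ∀ v, f v = 0 → 0 ≤ RCLike.re (star v ⬝ᵥ H *ᵥ v))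
    {g : (ι → 𝕜) →ₗ[𝕜] W} (hg : ∀ v, g v = 0 → RCLike.re (star v ⬝ᵥ (H + D) *ᵥ v) ≤ 0)
    (hVW : Module.finrank 𝕜 V + Module.finrank 𝕜 W ≤ Fintype.card ι) :
    (∀ i, d i < 0 → d i < -1) ∧ Fintype.card {i // d i < 0} = Module.finrank 𝕜 V := by
  have hs := hb.card_neg_le_finrank hf
  have ht := hb.neg_add.card_neg_le_finrank (f := g) fun v hv => by
    rw [neg_mulVec, dotProduct_neg, map_neg]
    exact neg_nonneg.mpr (hg v hv)
  rw [Fintype.card_subtype] at hs ht ⊢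
  obtain ⟨hdisj, hcard⟩ := disjoint_and_card_eq_of_union_eq_univ (by grind) hs ht hVW
  refine ⟨fun i hi => lt_of_le_of_ne ?_ fun hi' => ?_, hcard⟩
  · by_contra! h
    exact Finset.disjoint_left.mp hdisj (by simpa using hi) (by simpa using by linarith)
  · exact hb.neg_add.ne_zero_of_isUnit hHD.neg i (by linarith)

theorem bijective_domRestrict_iSup_eigenspace_inv_mul {H₁ H₂ : Matrix ι ι 𝕜} {V W : Type*}
    [AddCommGroup V] [Module 𝕜 V] [FiniteDimensional 𝕜 V]
    [AddCommGroup W] [Module 𝕜 W] [FiniteDimensional 𝕜 W]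
    (hH₂ : H₂.IsHermitian) (hpos : (H₁ - H₂).PosDef) (hu₁ : IsUnit H₁) (hu₂ : IsUnit H₂)
    {f : (ι → 𝕜) →ₗ[𝕜] V} (hf : ∀ v, f v = 0 → 0 ≤ RCLike.re (star v ⬝ᵥ H₂ *ᵥ v))
    {g : (ι → 𝕜) →ₗ[𝕜] W} (hg : ∀ v, g v = 0 → RCLike.re (star v ⬝ᵥ H₁ *ᵥ v) ≤ 0)
    (hVW : Module.finrank 𝕜 V + Module.finrank 𝕜 W ≤ Fintype.card ι) :
    Function.Bijective (f.domRestrict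
      (⨆ μ ∈ Set.Ioo (0 : ℝ) 1, Module.End.eigenspace (toLin' (H₂⁻¹ * H₁)) (μ : 𝕜))) := by
  obtain ⟨b, d, hb⟩ := exists_isPencilEigenbasis hpos hH₂
  obtain ⟨D, rfl⟩ : ∃ D, H₁ = H₂ + D := ⟨H₁ - H₂, (add_sub_cancel _ _).symm⟩
  rw [add_sub_cancel_left] at hb
  obtain ⟨hlt, hcard⟩ := hb.lt_neg_one_and_card_neg_eq hu₁ hf hg hVW
  have hindex : {i | ((1 + (d i)⁻¹ : ℝ) : 𝕜) ∈ (fun μ : ℝ => (μ : 𝕜)) '' Set.Ioo 0 1} =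
      {i | d i < 0} := by
    ext i
    rw [Set.mem_ofPred_eq, RCLike.ofReal_injective.mem_set_image, Set.mem_ofPred_eq, Set.mem_Ioo]
    refine ⟨fun h => inv_lt_zero.mp (by linarith [h.2]), fun hi => ?_⟩
    have := inv_lt_zero.mpr hi
    have := mul_inv_cancel₀ hi.ne
    constructor <;> nlinarith [hlt i hi]
  rw [iSup_eigenspace_eq_span_image b (a := fun i => ((1 + (d i)⁻¹ : ℝ) : 𝕜))
    (fun i => hb.inv_mul_mulVec hu₂ i) (fun μ : ℝ => (μ : 𝕜)), hindex]
  have hinj := hb.injective_domRestrict_span_neg hf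
  exact ⟨hinj, (LinearMap.injective_iff_surjective_of_finrank_eq_finrank
    ((finrank_span_image_setOf b.linearIndependent _).trans hcard)).mp hinj⟩

end Pencil

section Symplectic

variable {R l : Type*} [CommRing R] [Fintype l] [DecidableEq l]

/-- The symplectic form `J l R` vanishes on `W`. -/
def IsSymplecticIsotropic (W : Submodule R (l ⊕ l → R)) : Prop :=
  ∀ v ∈ W, ∀ w ∈ W, v ⬝ᵥ J l R *ᵥ w = 0

lemma inv_mul_mem_symplecticGroup {A B : Matrix (l ⊕ l) (l ⊕ l) R}
    (hA : A ∈ symplecticGroup l R) (hB : B ∈ symplecticGroup l R) :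
    A⁻¹ * B ∈ symplecticGroup l R := by
  have hAinv : A⁻¹ ∈ symplecticGroup l R :=
    SymplecticGroup.coe_inv' ⟨A, hA⟩ ▸ (⟨A, hA⟩ : symplecticGroup l R)⁻¹.2
  exact mul_mem hAinv hB

lemma dotProduct_J_mulVec (v w : l ⊕ l → R) :
    v ⬝ᵥ J l R *ᵥ w =
      (v ∘ Sum.inr) ⬝ᵥ (w ∘ Sum.inl) - (v ∘ Sum.inl) ⬝ᵥ (w ∘ Sum.inr) := by
  rw [← Sum.elim_comp_inl_inr v, ← Sum.elim_comp_inl_inr w, J, fromBlocks_mulVec,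
    sumElim_dotProduct_sumElim]
  simp [neg_mulVec, sub_eq_neg_add]

lemma dotProduct_J_mulVec_eq_zero_of_mem_eigenspace [NoZeroDivisors R]
    {M : Matrix (l ⊕ l) (l ⊕ l) R} (hM : M ∈ symplecticGroup l R) {μ ν : R} (hμν : μ * ν ≠ 1)
    {v w : l ⊕ l → R} (hv : v ∈ Module.End.eigenspace (toLin' M) μ)
    (hw : w ∈ Module.End.eigenspace (toLin' M) ν) : v ⬝ᵥ J l R *ᵥ w = 0 := by
  rw [Module.End.mem_eigenspace_iff, toLin'_apply] at hv hw
  have hscale : v ⬝ᵥ J l R *ᵥ w = μ * ν * (v ⬝ᵥ J l R *ᵥ w) := calc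
    _ = v ⬝ᵥ (Mᵀ * J l R * M) *ᵥ w := by rw [SymplecticGroup.mem_iff'.mp hM]
    _ = (M *ᵥ v) ⬝ᵥ J l R *ᵥ (M *ᵥ w) := by
      rw [← mulVec_mulVec, ← mulVec_mulVec, dotProduct_mulVec v, vecMul_transpose]
    _ = _ := by
      rw [hv, hw, mulVec_smul, smul_dotProduct, dotProduct_smul, smul_smul, smul_eq_mul]
  exact (mul_eq_zero.mp (by linear_combination hscale)).resolve_left (sub_ne_zero.mpr hμν.symm)

lemma isSymplecticIsotropic_iSup_eigenspace [NoZeroDivisors R] {κ : Type*}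
    {M : Matrix (l ⊕ l) (l ⊕ l) R} (hM : M ∈ symplecticGroup l R) (μ : κ → R) {s : Set κ}
    (hμ : ∀ j ∈ s, ∀ k ∈ s, μ j * μ k ≠ 1) :
    IsSymplecticIsotropic (⨆ k ∈ s, Module.End.eigenspace (toLin' M) (μ k)) := by
  let σ : (l ⊕ l → R) →ₗ[R] (l ⊕ l → R) →ₗ[R] R := toLinearMap₂' R (J l R)
  have hσ (v w) : σ v w = v ⬝ᵥ J l R *ᵥ w := toLinearMap₂'_apply' _ v w
  intro v hv w hw
  have hright (j) (hj : j ∈ s) (v) (hv : v ∈ Module.End.eigenspace (toLin' M) (μ j)) :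
      ⨆ k ∈ s, Module.End.eigenspace (toLin' M) (μ k) ≤ LinearMap.ker (σ v) :=
    iSup₂_le fun k hk w hw => LinearMap.mem_ker.mpr <| (hσ v w).trans <|
      dotProduct_J_mulVec_eq_zero_of_mem_eigenspace hM (hμ j hj k hk) hv hw
  have hleft : ⨆ j ∈ s, Module.End.eigenspace (toLin' M) (μ j) ≤ LinearMap.ker (σ.flip w) :=
    iSup₂_le fun j hj v hv => hright j hj v hv hw
  exact (hσ v w).symm.trans (hleft hv)

lemma exists_isSymm_range_sumElim_eq {W : Submodule R (l ⊕ l → R)}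
    (hiso : IsSymplecticIsotropic W)
    (hbij : Function.Bijective ((LinearMap.funLeft R R Sum.inl).domRestrict W)) :
    ∃ T : Matrix l l R, T.IsSymm ∧ (Set.range fun x => Sum.elim x (T *ᵥ x)) = (W : Set _) := by
  let e := LinearEquiv.ofBijective _ hbij
  let T := LinearMap.toMatrix' (LinearMap.funLeft R R Sum.inr ∘ₗ W.subtype ∘ₗ e.symm.toLinearMap)
  have hgraph (x) : Sum.elim x (T *ᵥ x) = e.symm x := by
    have hinl : (e.symm x : l ⊕ l → R) ∘ Sum.inl = x := e.apply_symm_apply x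
    have hinr : (e.symm x : l ⊕ l → R) ∘ Sum.inr = T *ᵥ x := by
      rw [← toLin'_apply, toLin'_toMatrix']
      rfl
    rw [← hinr]
    nth_rw 1 [← hinl]
    exact Sum.elim_comp_inl_inr _
  have hmem (x) : Sum.elim x (T *ᵥ x) ∈ W := hgraph x ▸ (e.symm x).2
  refine ⟨T, ?_, Set.Subset.antisymm (Set.range_subset_iff.mpr hmem) fun w hw => ?_⟩
  · ext i j
    have hσ := hiso _ (hmem (Pi.single i 1)) _ (hmem (Pi.single j 1))
    simpa [dotProduct_J_mulVec, sub_eq_zero] using hσ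
  · exact ⟨e ⟨w, hw⟩, (hgraph _).trans (by rw [e.symm_apply_apply])⟩

end Symplectic

lemma star_sub_inv_mulVec_dotProduct {R m : Type*} [CommRing R] [StarRing R] [Fintype m]
    [DecidableEq m] {A : Matrix m m R} (hA : A.IsHermitian) (hu : IsUnit A) (u w : m → R) :
    star (u - A⁻¹ *ᵥ w) ⬝ᵥ A *ᵥ (u - A⁻¹ *ᵥ w) =
      star u ⬝ᵥ A *ᵥ u - (star u ⬝ᵥ w + star w ⬝ᵥ u) + star w ⬝ᵥ A⁻¹ *ᵥ w := by
  have hdet : IsUnit A.det := (isUnit_iff_isUnit_det A).mp hu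
  have hcross (v) : star (A⁻¹ *ᵥ w) ⬝ᵥ A *ᵥ v = star w ⬝ᵥ v := by
    rw [star_mulVec, hA.inv.eq, ← dotProduct_mulVec, mulVec_mulVec, nonsing_inv_mul _ hdet,
      one_mulVec]
  rw [star_sub, sub_dotProduct, mulVec_sub, dotProduct_sub, dotProduct_sub, hcross, hcross,
    mulVec_mulVec, mul_nonsing_inv _ hdet, one_mulVec]
  ring

lemma conjM_eq_conjTranspose_s4 {m : Type*} {P : Matrix m m ℂ} (hP : P.IsSymm) : conjM P = Pᴴ := by
  rw [conjTranspose, hP.eq]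
  rfl

section Shear

variable {m : Type*} [Fintype m] [DecidableEq m]

/-- The complex canonical transformation `(x, ξ) ↦ (x, ξ + iPx)`, which removes the
pluriharmonic part `Re (P x · x) / 2` from a weight. -/
def shear (P : Matrix m m ℂ) : Matrix (m ⊕ m) (m ⊕ m) ℂ :=
  fromBlocks 1 0 (Complex.I • P) 1

lemma shear_mem_symplecticGroup {P : Matrix m m ℂ} (hP : P.IsSymm) :
    shear P ∈ symplecticGroup m ℂ :=
  SymplecticGroup.fromBlocks_mem_iff.mpr (by simp [hP.eq])

lemma shear_mulVec (P : Matrix m m ℂ) (v : m ⊕ m → ℂ) :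
    shear P *ᵥ v =
      Sum.elim (v ∘ Sum.inl) (v ∘ Sum.inr + Complex.I • P *ᵥ (v ∘ Sum.inl)) := by
  simp [shear, fromBlocks_mulVec, smul_mulVec, add_comm]

lemma J_mul_shear_conjM {P : Matrix m m ℂ} (hP : P.IsSymm) :
    J m ℂ * shear (conjM P) = (shear P)ᴴ * J m ℂ := by
  simp [J, shear, fromBlocks_multiply, fromBlocks_conjTranspose, conjM_eq_conjTranspose_s4 hP]

lemma conjM_inv {L : Matrix m m ℂ} (hL : L.IsHermitian) : conjM L⁻¹ = Lᵀ⁻¹ := by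
  rw [← transpose_nonsing_inv, ← hL.inv.eq, conjTranspose_transpose, hL.inv.eq]
  rfl

lemma isUnit_neg_I_smul_J : IsUnit (-Complex.I • J m ℂ) :=
  IsUnit.of_mul_eq_one (-Complex.I • J m ℂ) <| by
    rw [smul_mul_smul_comm, J_squared, neg_mul_neg, Complex.I_mul_I, neg_smul, one_smul, neg_neg]

end Shear

section Weight

variable {n : ℕ} {L P : Matrix (Fin n) (Fin n) ℂ}

lemma Amat_eq_shear_mul_shear (L P : Matrix (Fin n) (Fin n) ℂ) :
    Amat L P = shear (conjM P) *
      fromBlocks 0 (Complex.I • conjM L⁻¹) (Complex.I • L) 0 * shear P := by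
  have hmul : conjM (P * L⁻¹) = conjM P * conjM L⁻¹ := Matrix.map_mul
  simp only [Amat, shear, fromBlocks_multiply, hmul]
  simp [smul_smul, Matrix.mul_assoc, sub_eq_add_neg]

lemma Amat_mem_symplecticGroup (hL : L.IsHermitian) (hu : IsUnit L) (hP : P.IsSymm) :
    Amat L P ∈ symplecticGroup (Fin n) ℂ := by
  have hmid : fromBlocks 0 (Complex.I • conjM L⁻¹) (Complex.I • L) 0 ∈
      symplecticGroup (Fin n) ℂ := by
    have hmul_inv : Lᵀ * Lᵀ⁻¹ = 1 :=
      mul_nonsing_inv _ (isUnit_det_transpose L ((isUnit_iff_isUnit_det L).mp hu))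
    exact SymplecticGroup.fromBlocks_mem_iff.mpr (by simp [smul_smul, conjM_inv hL, hmul_inv])
  have hPbar : (conjM P).IsSymm := conjM_eq_conjTranspose_s4 hP ▸ hP.conjTranspose
  rw [Amat_eq_shear_mul_shear]
  exact mul_mem (mul_mem (shear_mem_symplecticGroup hPbar) hmid) (shear_mem_symplecticGroup hP)

lemma isUnit_Amat (hL : L.IsHermitian) (hu : IsUnit L) (hP : P.IsSymm) : IsUnit (Amat L P) :=
  (isUnit_iff_isUnit_det _).mpr <|
    SymplecticGroup.symplectic_det (Amat_mem_symplecticGroup hL hu hP)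

/-- The Hermitian form `v ↦ -i σ(v̄, 𝐀_Φ v)`, with `σ = symp`, on `ℂⁿ × ℂⁿ` attached to the weight
`Φ` with Levi matrix `L` and pluriharmonic part `P`. -/
def weightForm (L P : Matrix (Fin n) (Fin n) ℂ) : Matrix (Fin n ⊕ Fin n) (Fin n ⊕ Fin n) ℂ :=
  -Complex.I • J (Fin n) ℂ * Amat L P

lemma weightForm_inv_mul_weightForm (L₁ P₁ L₂ P₂ : Matrix (Fin n) (Fin n) ℂ) :
    (weightForm L₂ P₂)⁻¹ * weightForm L₁ P₁ = (Amat L₂ P₂)⁻¹ * Amat L₁ P₁ := by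
  rw [weightForm, weightForm, Matrix.mul_inv_rev, Matrix.mul_assoc,
    nonsing_inv_mul_cancel_left _ _ ((isUnit_iff_isUnit_det _).mp isUnit_neg_I_smul_J)]

lemma isUnit_weightForm (hL : L.IsHermitian) (hu : IsUnit L) (hP : P.IsSymm) :
    IsUnit (weightForm L P) :=
  isUnit_neg_I_smul_J.mul (isUnit_Amat hL hu hP)

lemma weightForm_eq_conjTranspose_mul_mul (hP : P.IsSymm) (L : Matrix (Fin n) (Fin n) ℂ) :
    weightForm L P = (shear P)ᴴ * fromBlocks (-L) 0 0 (conjM L⁻¹) * shear P := by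
  have hmid : -Complex.I • (J (Fin n) ℂ *
      fromBlocks 0 (Complex.I • conjM L⁻¹) (Complex.I • L) 0) =
        fromBlocks (-L) 0 0 (conjM L⁻¹) := by
    simp [J, fromBlocks_multiply, fromBlocks_smul, fromBlocks_neg, smul_smul]
  rw [weightForm, Amat_eq_shear_mul_shear, ← hmid, Matrix.smul_mul, ← Matrix.mul_assoc,
    ← Matrix.mul_assoc, J_mul_shear_conjM hP, Matrix.mul_smul, Matrix.smul_mul,
    Matrix.mul_assoc (shear P)ᴴ]

lemma isHermitian_weightForm (hL : L.IsHermitian) (hP : P.IsSymm) :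
    (weightForm L P).IsHermitian := by
  rw [weightForm_eq_conjTranspose_mul_mul hP, conjM_inv hL]
  exact isHermitian_conjTranspose_mul_mul _ <|
    hL.neg.fromBlocks conjTranspose_zero hL.transpose.inv

lemma star_dotProduct_weightForm_mulVec (hL : L.IsHermitian) (hP : P.IsSymm)
    (x ξ : Fin n → ℂ) :
    star (Sum.elim x ξ) ⬝ᵥ weightForm L P *ᵥ Sum.elim x ξ =
      star (ξ + Complex.I • P *ᵥ x) ⬝ᵥ Lᵀ⁻¹ *ᵥ (ξ + Complex.I • P *ᵥ x) -
        star x ⬝ᵥ L *ᵥ x := by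
  rw [weightForm_eq_conjTranspose_mul_mul hP, conjM_inv hL, ← mulVec_mulVec, ← mulVec_mulVec,
    dotProduct_mulVec, ← star_mulVec, shear_mulVec, fromBlocks_mulVec, Function.star_sumElim,
    sumElim_dotProduct_sumElim]
  simp [neg_mulVec, sub_eq_neg_add]

lemma weight_sub_I_smul_add_weight_I_smul_sub (hP : P.IsSymm) (L : Matrix (Fin n) (Fin n) ℂ)
    (x y : Fin n → ℂ) :
    weight L P (x - Complex.I • y) + weight L P (Complex.I • x - y) =
      (star x ⬝ᵥ L *ᵥ x).re + (star y ⬝ᵥ L *ᵥ y).re - 2 * (Complex.I * (P *ᵥ x ⬝ᵥ y)).re := by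
  have hsymm : P *ᵥ y ⬝ᵥ x = P *ᵥ x ⬝ᵥ y := by
    rw [dotProduct_comm, dotProduct_mulVec, ← mulVec_transpose, hP.eq]
  have hdot (u v : Fin n → ℂ) : dotC u v = u ⬝ᵥ v := rfl
  simp only [weight, hdot, mulVec_sub, mulVec_smul, star_sub, star_smul, sub_dotProduct,
    dotProduct_sub, smul_dotProduct, dotProduct_smul, hsymm, dotProduct_comm _ (star _)]
  simp only [one_div, smul_eq_mul, RCLike.star_def, Complex.conj_I, neg_mul, sub_neg_eq_add,
    Complex.add_re, Complex.sub_re, Complex.mul_re, Complex.I_re, zero_mul, Complex.I_im, one_mul,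
    zero_sub, Complex.sub_im, Complex.mul_im, zero_add, neg_sub, Complex.neg_re, mul_neg]
  ring

-- Completing the square in `star y`: the last summand vanishes at the maximizing `y`.
lemma re_star_dotProduct_weightForm_mulVec (hL : L.IsHermitian) (hu : IsUnit L) (hP : P.IsSymm)
    (x ξ y : Fin n → ℂ) :
    (star (Sum.elim x ξ) ⬝ᵥ weightForm L P *ᵥ Sum.elim x ξ).re =
      2 * (ξ ⬝ᵥ y).re - (weight L P (x - Complex.I • y) + weight L P (Complex.I • x - y)) +
        (star (star y - Lᵀ⁻¹ *ᵥ (ξ + Complex.I • P *ᵥ x)) ⬝ᵥ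
          Lᵀ *ᵥ (star y - Lᵀ⁻¹ *ᵥ (ξ + Complex.I • P *ᵥ x))).re := by
  have hyy : star (star y) ⬝ᵥ Lᵀ *ᵥ star y = star y ⬝ᵥ L *ᵥ y := by
    rw [star_star, mulVec_transpose, dotProduct_comm, ← dotProduct_mulVec]
  have hcross : (star (ξ + Complex.I • P *ᵥ x) ⬝ᵥ star y).re =
      ((ξ + Complex.I • P *ᵥ x) ⬝ᵥ y).re := by
    rw [star_dotProduct_star, dotProduct_comm]
    exact Complex.conj_re _
  rw [star_dotProduct_weightForm_mulVec hL hP, weight_sub_I_smul_add_weight_I_smul_sub hP,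
    star_sub_inv_mulVec_dotProduct hL.transpose ((isUnit_transpose L).mpr hu), hyy, star_star]
  simp only [Complex.sub_re, Complex.add_re, hcross, dotProduct_comm y, add_dotProduct,
    smul_dotProduct, smul_eq_mul]
  ring

lemma le_re_star_dotProduct_weightForm_mulVec (hL : L.PosDef) (hP : P.IsSymm)
    (x ξ y : Fin n → ℂ) :
    2 * (ξ ⬝ᵥ y).re - (weight L P (x - Complex.I • y) + weight L P (Complex.I • x - y)) ≤
      (star (Sum.elim x ξ) ⬝ᵥ weightForm L P *ᵥ Sum.elim x ξ).re := by
  rw [re_star_dotProduct_weightForm_mulVec hL.1 hL.isUnit hP x ξ y]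
  exact le_add_of_nonneg_right (hL.transpose.posSemidef.re_dotProduct_nonneg _)

lemma exists_re_star_dotProduct_weightForm_mulVec_eq (hL : L.PosDef) (hP : P.IsSymm)
    (x ξ : Fin n → ℂ) :
    ∃ y, (star (Sum.elim x ξ) ⬝ᵥ weightForm L P *ᵥ Sum.elim x ξ).re =
        2 * (ξ ⬝ᵥ y).re - (weight L P (x - Complex.I • y) + weight L P (Complex.I • x - y)) ∧
      (x = 0 → y = 0 → ξ = 0) := by
  refine ⟨star (Lᵀ⁻¹ *ᵥ (ξ + Complex.I • P *ᵥ x)), ?_, ?_⟩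
  · rw [re_star_dotProduct_weightForm_mulVec hL.1 hL.isUnit hP, star_star, sub_self]
    simp
  · rintro rfl hy
    exact mulVec_injective_of_isUnit hL.transpose.inv.isUnit (by simpa using hy)

lemma re_star_dotProduct_weightForm_mulVec_nonneg (hL : L.PosDef) (hP : P.IsSymm)
    {v : Fin n ⊕ Fin n → ℂ} (hv : LinearMap.funLeft ℂ ℂ Sum.inl v = 0) :
    0 ≤ (star v ⬝ᵥ weightForm L P *ᵥ v).re := by
  rw [← Sum.elim_comp_inl_inr v, star_dotProduct_weightForm_mulVec hL.1 hP,
    show v ∘ Sum.inl = 0 from hv]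
  simpa using hL.transpose.inv.posSemidef.re_dotProduct_nonneg (v ∘ Sum.inr)

lemma re_star_dotProduct_weightForm_mulVec_nonpos (hL : L.PosDef) (hP : P.IsSymm)
    {v : Fin n ⊕ Fin n → ℂ}
    (hv : (LinearMap.funLeft ℂ ℂ Sum.inr ∘ₗ (shear P).mulVecLin) v = 0) :
    (star v ⬝ᵥ weightForm L P *ᵥ v).re ≤ 0 := by
  have hζ : v ∘ Sum.inr + Complex.I • P *ᵥ (v ∘ Sum.inl) = 0 := by
    rw [← hv, LinearMap.comp_apply, mulVecLin_apply, shear_mulVec]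
    rfl
  rw [← Sum.elim_comp_inl_inr v, star_dotProduct_weightForm_mulVec hL.1 hP, hζ]
  simpa using hL.posSemidef.re_dotProduct_nonneg (v ∘ Sum.inl)

lemma add_weight_lt_add_weight {L₁ P₁ L₂ P₂ : Matrix (Fin n) (Fin n) ℂ}
    (hlt : ∀ x, x ≠ 0 → weight L₁ P₁ x < weight L₂ P₂ x) {x y : Fin n → ℂ} (h : x ≠ 0 ∨ y ≠ 0) :
    weight L₁ P₁ (x - Complex.I • y) + weight L₁ P₁ (Complex.I • x - y) <
      weight L₂ P₂ (x - Complex.I • y) + weight L₂ P₂ (Complex.I • x - y) := by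
  have hle (z) : weight L₁ P₁ z ≤ weight L₂ P₂ z := by
    rcases eq_or_ne z 0 with rfl | hz
    · simp [weight, dotC]
    · exact (hlt z hz).le
  by_cases hx : x - Complex.I • y = 0
  · refine add_lt_add_of_le_of_lt (hle _) (hlt _ fun hy => ?_)
    obtain rfl : x = Complex.I • y := sub_eq_zero.mp hx
    have hy0 : y = 0 := by
      rw [smul_smul, Complex.I_mul_I, neg_one_smul, ← neg_add', neg_eq_zero, ← two_smul ℂ] at hy
      exact (smul_eq_zero.mp hy).resolve_left two_ne_zero
    simp [hy0] at h
  · exact add_lt_add_of_lt_of_le (hlt _ hx) (hle _)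

theorem posDef_weightForm_sub_weightForm {L₁ P₁ L₂ P₂ : Matrix (Fin n) (Fin n) ℂ}
    (hL₁ : L₁.PosDef) (hL₂ : L₂.PosDef) (hP₁ : P₁.IsSymm) (hP₂ : P₂.IsSymm)
    (hlt : ∀ x, x ≠ 0 → weight L₁ P₁ x < weight L₂ P₂ x) :
    (weightForm L₁ P₁ - weightForm L₂ P₂).PosDef := by
  have hherm := (isHermitian_weightForm hL₁.1 hP₁).sub (isHermitian_weightForm hL₂.1 hP₂)
  refine .of_dotProduct_mulVec_pos hherm fun v hv =>
    Complex.pos_iff.mpr ⟨?_, (hherm.im_star_dotProduct_mulVec_self v).symm⟩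
  obtain ⟨x, ξ, rfl⟩ : ∃ x ξ, v = Sum.elim x ξ := ⟨_, _, (Sum.elim_comp_inl_inr v).symm⟩
  obtain ⟨y, hy, hξ⟩ := exists_re_star_dotProduct_weightForm_mulVec_eq hL₂ hP₂ x ξ
  have hxy : x ≠ 0 ∨ y ≠ 0 := by
    by_contra! h
    simp [h.1, hξ h.1 h.2] at hv
  have hsup := le_re_star_dotProduct_weightForm_mulVec hL₁ hP₁ x ξ y
  have hsum := add_weight_lt_add_weight hlt hxy
  rw [sub_mulVec, dotProduct_sub, Complex.sub_re, hy]
  linarith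

end Weight

/-- the stable subspace of 𝐀_{Φ₂}⁻¹𝐀_{Φ₁} is the graph of a symmetric matrix T. -/
theorem stable_subspace_is_graph (n : ℕ) (L₁ P₁ L₂ P₂ : Matrix (Fin n) (Fin n) ℂ)
    (hL₁ : L₁.PosDef) (hL₂ : L₂.PosDef) (hP₁ : P₁.IsSymm) (hP₂ : P₂.IsSymm)
    (hlt : ∀ x : Fin n → ℂ, x ≠ 0 → weight L₁ P₁ x < weight L₂ P₂ x) :
    ∃ T : Matrix (Fin n) (Fin n) ℂ, T.IsSymm ∧
      (Set.range fun x : Fin n → ℂ => Sum.elim x (T.mulVec x)) =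
        ↑(⨆ μ ∈ Set.Ioo (0 : ℝ) 1,
          Module.End.eigenspace
            (Matrix.toLin' ((Amat L₂ P₂)⁻¹ * Amat L₁ P₁)) (μ : ℂ)) := by
  have hM : (Amat L₂ P₂)⁻¹ * Amat L₁ P₁ ∈ symplecticGroup (Fin n) ℂ :=
    inv_mul_mem_symplecticGroup (Amat_mem_symplecticGroup hL₂.1 hL₂.isUnit hP₂)
      (Amat_mem_symplecticGroup hL₁.1 hL₁.isUnit hP₁)
  refine exists_isSymm_range_sumElim_eq
    (isSymplecticIsotropic_iSup_eigenspace hM (fun μ : ℝ => (μ : ℂ)) fun μ hμ ν hν => ?_) ?_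
  · exact_mod_cast (mul_lt_one_of_nonneg_of_lt_one_left hμ.1.le hμ.2 hν.2.le).ne
  · rw [← weightForm_inv_mul_weightForm]
    exact bijective_domRestrict_iSup_eigenspace_inv_mul (isHermitian_weightForm hL₂.1 hP₂)
      (posDef_weightForm_sub_weightForm hL₁ hL₂ hP₁ hP₂ hlt)
      (isUnit_weightForm hL₁.1 hL₁.isUnit hP₁) (isUnit_weightForm hL₂.1 hL₂.isUnit hP₂)
      (fun v => re_star_dotProduct_weightForm_mulVec_nonneg hL₂ hP₂)
      (fun v => re_star_dotProduct_weightForm_mulVec_nonpos hL₁ hP₁) (by simp)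

end
end
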